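/- In dimension 19, every finite set S of points on the unit sphere of EuclideanSpace ℝ (Fin 19) (i.e., ‖x‖ = 1 for all x ∈ S) such that any two distinct points of S are at Euclidean distance at least 1 has cardinality at most 24812; that is, the kissing number in dimension 19 is at most 24812. -/

import Mathlib

/-!
The bound is a three-point bound in the sense of Bachoc and Vallentin. Let `A` be a combination of
Gegenbauer polynomials with nonnegative coefficients, let `G(u, v, t)` be a positive definite kernel
on the points `y, z` of the sphere depending on the position relative to a third point `x`, where
`u = ⟪x, y⟫`, `v = ⟪x, z⟫` and `t = ⟪y, z⟫`, and let `h` be a polynomial in one variable. The sum of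
`A` over all pairs and the sum of `G` over all triples of points of a configuration are nonnegative.
If the symmetrization of `G` is at most `h(u) + h(v) + h(t)` on triples of distinct points, then the
sum of `G` over these triples is at most a sum over pairs, and a configuration of `N` points with
`A(u) + G(u, u, 1) + (N - 2) * h(u) ≤ -c` for all pairs of distinct points satisfies
`c * (N - 1) ≤ A(1)`. There are `A`, `G`, `h`, `c` for which this fails at `N = 24813`.

Positive definiteness rests on the addition formula: the Gegenbauer kernel of degree `k` reproduces
harmonic polynomials for the Fischer inner product. The inequality on pairs with `-1 ≤ u ≤ 1 / 2`
and the one on triples with `-1 ≤ u ≤ v ≤ t ≤ 1 / 2` and nonnegative Gram determinant are proved by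
branch and bound: a polynomial on a box is bounded below by its least Bernstein coefficient, and
bisecting the box replaces the coefficients by averages. All coefficients of a polynomial are
processed at once as the digits of one large natural number, rounded down. The initial array is
obtained by Kronecker substitution, which evaluates the polynomial at powers of two.
-/

open MvPolynomial Finset

namespace KissingNumber

section Fischer

variable {σ : Type*} [Fintype σ]

/-- The Fischer inner product `⟨p, q⟩ = p(∂) q |₀ = ∑ α, α! p_α q_α` on real polynomials, for which
multiplication by `X i` is adjoint to `∂ᵢ`. -/
noncomputable def fischer : MvPolynomial σ ℝ →ₗ[ℝ] MvPolynomial σ ℝ →ₗ[ℝ] ℝ :=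
  (basisMonomials σ ℝ).constr ℝ fun α => (∏ i, ((α i).factorial : ℝ)) • lcoeff ℝ α

lemma fischer_monomial (α : σ →₀ ℕ) (c : ℝ) (q : MvPolynomial σ ℝ) :
    fischer (monomial α c) q = c * (∏ i, ((α i).factorial : ℝ)) * coeff α q := by
  have h : monomial α c = c • basisMonomials σ ℝ α := by simp [smul_monomial]
  rw [h, map_smul, fischer, Module.Basis.constr_basis]
  simp [mul_assoc]

lemma fischer_one (q : MvPolynomial σ ℝ) : fischer 1 q = constantCoeff q := by
  rw [show (1 : MvPolynomial σ ℝ) = monomial 0 1 from rfl, fischer_monomial]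
  simp [constantCoeff_eq]

lemma fischer_self_nonneg (p : MvPolynomial σ ℝ) : 0 ≤ fischer p p := by
  conv_rhs => enter [1, 2]; rw [p.as_sum]
  rw [map_sum, LinearMap.sum_apply]
  refine sum_nonneg fun α _ => ?_
  rw [fischer_monomial, mul_right_comm]
  exact mul_nonneg (mul_self_nonneg _) (by positivity)

lemma prod_factorial_add_single (α : σ →₀ ℕ) (i : σ) :
    ∏ j, (((α + Finsupp.single i 1 : σ →₀ ℕ) j).factorial : ℝ) =
      (α i + 1) * ∏ j, ((α j).factorial : ℝ) := by
  classical
  rw [← mul_prod_erase univ _ (mem_univ i),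
    ← mul_prod_erase univ (fun j => ((α j).factorial : ℝ)) (mem_univ i), ← mul_assoc]
  congr 1
  · simp [Nat.factorial_succ]
  · refine prod_congr rfl fun j hj => ?_
    simp [(ne_of_mem_erase hj).symm]

lemma fischer_X_mul (i : σ) (p q : MvPolynomial σ ℝ) :
    fischer (X i * p) q = fischer p (pderiv i q) := by
  induction p using MvPolynomial.induction_on' with
  | monomial α c =>
    rw [X, monomial_mul, one_mul, add_comm, fischer_monomial, fischer_monomial, coeff_pderiv,
      prod_factorial_add_single]
    ring
  | add p₁ p₂ h₁ h₂ => rw [mul_add, map_add, map_add, LinearMap.add_apply, h₁, h₂]; rfl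

end Fischer

section DifferentialOperators

variable {σ : Type*}

lemma pderiv_pderiv_comm (i j : σ) (p : MvPolynomial σ ℝ) :
    pderiv i (pderiv j p) = pderiv j (pderiv i p) := by
  have bracket_eq_zero : ⁅pderiv (R := ℝ) i, pderiv (R := ℝ) j⁆ = 0 := by
    classical
    refine derivation_ext fun k => ?_
    simp [Derivation.commutator_apply, pderiv_X, Pi.single_apply, apply_ite]
  exact sub_eq_zero.1 (by rw [← Derivation.commutator_apply, bracket_eq_zero]; rfl)

variable [Fintype σ]

/-- The linear form `∑ i, x i * X i`. -/
noncomputable def linearForm (x : σ → ℝ) : MvPolynomial σ ℝ := ∑ i, C (x i) * X i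

variable (σ) in
/-- The squared norm `∑ i, X i ^ 2` as a polynomial. -/
noncomputable def normSqPoly : MvPolynomial σ ℝ := ∑ i, X i * X i

/-- The derivative of polynomials in the direction `x`. -/
noncomputable def dirDeriv (x : σ → ℝ) : Derivation ℝ (MvPolynomial σ ℝ) (MvPolynomial σ ℝ) :=
  ∑ i, x i • pderiv i

variable (σ) in
/-- The Laplacian `∑ i, ∂ᵢ²` on polynomials. -/
noncomputable def laplacian : MvPolynomial σ ℝ →ₗ[ℝ] MvPolynomial σ ℝ :=
  ∑ i, (pderiv i).toLinearMap ∘ₗ (pderiv i).toLinearMap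

lemma dirDeriv_apply (x : σ → ℝ) (p : MvPolynomial σ ℝ) :
    dirDeriv x p = ∑ i, x i • pderiv i p := by
  change Derivation.coeFnAddMonoidHom (dirDeriv x) p = _
  simp [dirDeriv]

lemma laplacian_apply (p : MvPolynomial σ ℝ) :
    laplacian σ p = ∑ i, pderiv i (pderiv i p) := by
  simp [laplacian]

lemma fischer_linearForm_mul (x : σ → ℝ) (p q : MvPolynomial σ ℝ) :
    fischer (linearForm x * p) q = fischer p (dirDeriv x q) := by
  simp only [linearForm, sum_mul, map_sum, LinearMap.sum_apply, dirDeriv_apply, C_mul',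
    smul_mul_assoc, map_smul, LinearMap.smul_apply, fischer_X_mul]

lemma fischer_normSqPoly_mul (p q : MvPolynomial σ ℝ) :
    fischer (normSqPoly σ * p) q = fischer p (laplacian σ q) := by
  simp only [normSqPoly, sum_mul, map_sum, LinearMap.sum_apply, laplacian_apply, mul_assoc,
    fischer_X_mul]

lemma pderiv_linearForm (x : σ → ℝ) (i : σ) : pderiv i (linearForm x) = C (x i) := by
  classical
  simp [linearForm, map_sum, pderiv_X, Pi.single_apply]

lemma pderiv_normSqPoly (i : σ) : pderiv i (normSqPoly σ) = 2 * X i := by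
  classical
  simp [normSqPoly, map_sum, pderiv_X, Pi.single_apply, two_mul, sum_add_distrib]

lemma dirDeriv_linearForm (x : σ → ℝ) : dirDeriv x (linearForm x) = (∑ i, x i ^ 2) • 1 := by
  simp [dirDeriv_apply, pderiv_linearForm, sum_smul, smul_eq_C_mul, pow_two]

lemma dirDeriv_normSqPoly (x : σ → ℝ) : dirDeriv x (normSqPoly σ) = (2 : ℝ) • linearForm x := by
  simp only [dirDeriv_apply, pderiv_normSqPoly, linearForm, smul_sum, two_smul, smul_eq_C_mul]
  exact sum_congr rfl fun i _ => by ring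

lemma laplacian_linearForm_mul (x : σ → ℝ) (p : MvPolynomial σ ℝ) :
    laplacian σ (linearForm x * p) = (2 : ℝ) • dirDeriv x p + linearForm x * laplacian σ p := by
  simp only [laplacian_apply, dirDeriv_apply, two_smul, smul_eq_C_mul, pderiv_mul,
    pderiv_linearForm, map_add, pderiv_C, mul_sum, ← sum_add_distrib]
  exact sum_congr rfl fun i _ => by ring

lemma laplacian_normSqPoly_mul (p : MvPolynomial σ ℝ) :
    laplacian σ (normSqPoly σ * p) =
      (2 * Fintype.card σ : ℝ) • p + (4 : ℝ) • ∑ i, X i * pderiv i p +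
        normSqPoly σ * laplacian σ p := by
  have pderiv_two_mul_X (i : σ) : pderiv i (2 * X i : MvPolynomial σ ℝ) = 2 := by
    rw [← map_ofNat C 2, pderiv_C_mul, pderiv_X_self, mul_one]
  have sum_two_mul : (2 * Fintype.card σ : ℝ) • p = ∑ _i : σ, 2 * p := by
    rw [sum_const, card_univ, two_mul p]
    module
  rw [sum_two_mul]
  simp only [laplacian_apply, pderiv_mul, pderiv_normSqPoly, map_add, pderiv_two_mul_X, mul_sum,
    smul_sum, ← sum_add_distrib]
  refine sum_congr rfl fun i _ => ?_
  rw [smul_eq_C_mul, map_ofNat C 4]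
  ring

lemma laplacian_dirDeriv (x : σ → ℝ) (p : MvPolynomial σ ℝ) :
    laplacian σ (dirDeriv x p) = dirDeriv x (laplacian σ p) := by
  simp only [laplacian_apply, dirDeriv_apply, map_sum, map_smul, smul_sum]
  rw [sum_comm]
  refine sum_congr rfl fun i _ => sum_congr rfl fun j _ => ?_
  rw [pderiv_pderiv_comm i j p, pderiv_pderiv_comm i j]

end DifferentialOperators

section Zonal

variable {σ : Type*} [Fintype σ]

/-- The zonal harmonic polynomial of degree `k` with pole `x`, given by the homogenised three-term
recurrence of the Gegenbauer polynomials. -/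
noncomputable def zonal (x : σ → ℝ) : ℕ → MvPolynomial σ ℝ
  | 0 => 1
  | 1 => linearForm x
  | k + 2 =>
      ((2 * k + Fintype.card σ) / (k + Fintype.card σ - 1) : ℝ) •
        (linearForm x * zonal x (k + 1)) -
      ((k + 1) / (k + Fintype.card σ - 1) * ∑ i, x i ^ 2 : ℝ) • (normSqPoly σ * zonal x k)

/-- The Gegenbauer polynomial of degree `k` for the sphere of `ℝ^d`, normalised to be `1` at `1` and
homogenised: `gegenbauer d (‖x‖ * ‖y‖ * t) (‖x‖ ^ 2 * ‖y‖ ^ 2) k` is `(‖x‖ * ‖y‖) ^ k * P_k(t)`. -/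
noncomputable def gegenbauer (d s w : ℝ) : ℕ → ℝ
  | 0 => 1
  | 1 => s
  | k + 2 => (2 * k + d) / (k + d - 1) * (s * gegenbauer d s w (k + 1)) -
      (k + 1) / (k + d - 1) * (w * gegenbauer d s w k)

lemma linearForm_isHomogeneous (x : σ → ℝ) : (linearForm x).IsHomogeneous 1 :=
  IsHomogeneous.sum _ _ _ fun i _ => isHomogeneous_C_mul_X (x i) i

lemma normSqPoly_isHomogeneous : (normSqPoly σ).IsHomogeneous 2 :=
  IsHomogeneous.sum _ _ _ fun i _ => (isHomogeneous_X ℝ i).mul (isHomogeneous_X ℝ i)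

lemma zonal_isHomogeneous (x : σ → ℝ) : ∀ k, (zonal x k).IsHomogeneous k
  | 0 => isHomogeneous_one _ _
  | 1 => linearForm_isHomogeneous x
  | k + 2 => by
    have h₁ := (linearForm_isHomogeneous x).mul (zonal_isHomogeneous x (k + 1))
    have h₀ := normSqPoly_isHomogeneous.mul (zonal_isHomogeneous x k)
    rw [show 1 + (k + 1) = k + 2 by ring] at h₁
    rw [add_comm 2 k] at h₀
    rw [zonal, smul_eq_C_mul, smul_eq_C_mul]
    exact (h₁.C_mul _).sub (h₀.C_mul _)

lemma eval_zonal (x y : σ → ℝ) : ∀ k, eval y (zonal x k) =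
    gegenbauer (Fintype.card σ) (∑ i, x i * y i) ((∑ i, x i ^ 2) * ∑ i, y i ^ 2) k
  | 0 => by simp [zonal, gegenbauer]
  | 1 => by simp [zonal, gegenbauer, linearForm]
  | k + 2 => by
    rw [zonal, gegenbauer, ← eval_zonal x y (k + 1), ← eval_zonal x y k]
    simp only [map_sub, map_mul, smul_eval, linearForm, normSqPoly, map_sum, eval_C, eval_X,
      ← pow_two (y _)]
    ring

lemma nat_add_sub_one_pos {d : ℝ} (hd : 1 < d) (k : ℕ) : 0 < k + d - 1 := by
  have : (0 : ℝ) ≤ k := k.cast_nonneg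
  linarith

lemma dirDeriv_zonal (hσ : 1 < (Fintype.card σ : ℝ)) (x : σ → ℝ) : ∀ k : ℕ,
    dirDeriv x (zonal x (k + 1)) = ((k + 1) * ∑ i, x i ^ 2) • zonal x k
  | 0 => by simp [zonal, dirDeriv_linearForm]
  | 1 => by
    have hd := (sub_pos.2 hσ).ne'
    simp only [zonal, map_sub, Derivation.map_smul, Derivation.leibniz,
      dirDeriv_linearForm, dirDeriv_normSqPoly, smul_eq_mul, mul_smul_comm, mul_one]
    match_scalars
    simp only [zero_add]
    field_simp
    ring
  | k + 2 => by
    have hd₀ := (nat_add_sub_one_pos hσ k).ne'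
    have hd₁ := (nat_add_sub_one_pos hσ (k + 1)).ne'
    rw [zonal]
    simp only [map_sub, Derivation.map_smul, Derivation.leibniz, dirDeriv_linearForm,
      dirDeriv_normSqPoly, dirDeriv_zonal hσ x (k + 1), dirDeriv_zonal hσ x k,
      smul_eq_mul, mul_smul_comm, mul_one]
    rw [zonal, mul_comm (zonal x (k + 1))]
    match_scalars <;> push_cast at hd₁ ⊢ <;> field_simp <;> ring

lemma laplacian_zonal (hσ : 1 < (Fintype.card σ : ℝ)) (x : σ → ℝ) :
    ∀ k, laplacian σ (zonal x k) = 0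
  | 0 => by simp [zonal, laplacian_apply]
  | 1 => by simp [zonal, laplacian_apply, pderiv_linearForm]
  | k + 2 => by
    have hd := (nat_add_sub_one_pos hσ k).ne'
    rw [zonal, map_sub, map_smul, map_smul, laplacian_linearForm_mul, laplacian_normSqPoly_mul,
      laplacian_zonal hσ x (k + 1), laplacian_zonal hσ x k, dirDeriv_zonal hσ x k,
      (zonal_isHomogeneous x k).sum_X_mul_pderiv, mul_zero, mul_zero]
    match_scalars
    field_simp
    ring

lemma eval_dirDeriv_self {k : ℕ} (x : σ → ℝ) {q : MvPolynomial σ ℝ} (hq : q.IsHomogeneous k) :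
    eval x (dirDeriv x q) = k * eval x q := by
  simpa [dirDeriv_apply] using congrArg (eval x) hq.sum_X_mul_pderiv

lemma dirDeriv_isHomogeneous {k : ℕ} (x : σ → ℝ) {q : MvPolynomial σ ℝ}
    (hq : q.IsHomogeneous (k + 1)) : (dirDeriv x q).IsHomogeneous k := by
  rw [dirDeriv_apply]
  refine IsHomogeneous.sum _ _ _ fun i _ => ?_
  rw [smul_eq_C_mul]
  exact (hq.pderiv (i := i)).C_mul (x i)

/-- The constant of the reproducing property `fischer_zonal` of the zonal polynomials of degree `k`
in `d` variables. -/
noncomputable def zonalConst (d : ℝ) : ℕ → ℝ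
  | 0 => 1
  | 1 => 1
  | k + 2 => (2 * k + d) / (k + d - 1) * ((k + 2) * zonalConst d (k + 1))

lemma zonalConst_pos {d : ℝ} (hd : 1 < d) : ∀ k, 0 < zonalConst d k
  | 0 => one_pos
  | 1 => one_pos
  | k + 2 => by
    have := nat_add_sub_one_pos hd k
    have := zonalConst_pos hd (k + 1)
    rw [zonalConst]
    positivity

lemma fischer_zonal (x : σ → ℝ) : ∀ (k : ℕ) {q : MvPolynomial σ ℝ}, q.IsHomogeneous k →
    laplacian σ q = 0 → fischer (zonal x k) q = zonalConst (Fintype.card σ) k * eval x q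
  | 0, q, hq, _ => by
    obtain ⟨c, rfl⟩ : ∃ c, q = C c :=
      ⟨_, totalDegree_eq_zero_iff_eq_C.1 (Nat.le_zero.1 hq.totalDegree_le)⟩
    simp [zonal, fischer_one, zonalConst]
  | 1, q, hq, hharm => by
    rw [zonal, ← mul_one (linearForm x), fischer_linearForm_mul]
    refine (fischer_zonal x 0 (dirDeriv_isHomogeneous x hq) ?_).trans ?_
    · rw [laplacian_dirDeriv, hharm, map_zero]
    · simp [eval_dirDeriv_self x hq, zonalConst]
  | k + 2, q, hq, hharm => by
    have hderiv := fischer_zonal x (k + 1) (dirDeriv_isHomogeneous x hq)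
      (by rw [laplacian_dirDeriv, hharm, map_zero])
    simp only [zonal, map_sub, map_smul, LinearMap.sub_apply, LinearMap.smul_apply,
      fischer_normSqPoly_mul, fischer_linearForm_mul, hharm, map_zero, hderiv,
      eval_dirDeriv_self x hq, zonalConst, smul_eq_mul]
    push_cast
    ring

theorem sum_sum_mul_gegenbauer_coord_nonneg (hσ : 1 < (Fintype.card σ : ℝ)) {ι : Type*}
    (s : Finset ι) (c : ι → ℝ) (y : ι → σ → ℝ) (k : ℕ) :
    0 ≤ ∑ i ∈ s, ∑ j ∈ s, c i * c j * gegenbauer (Fintype.card σ) (∑ l, y i l * y j l)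
      ((∑ l, y i l ^ 2) * ∑ l, y j l ^ 2) k := by
  set p : MvPolynomial σ ℝ := ∑ j ∈ s, c j • zonal (y j) k with hp
  have hhom : p.IsHomogeneous k := IsHomogeneous.sum _ _ _ fun j _ => by
    rw [smul_eq_C_mul]
    exact (zonal_isHomogeneous (y j) k).C_mul (c j)
  have hharm : laplacian σ p = 0 := by simp [p, laplacian_zonal hσ]
  have hself : fischer p p = zonalConst (Fintype.card σ) k * ∑ i ∈ s, ∑ j ∈ s, c i * c j *
      gegenbauer (Fintype.card σ) (∑ l, y i l * y j l) ((∑ l, y i l ^ 2) * ∑ l, y j l ^ 2) k := by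
    conv_lhs => enter [1, 2]; rw [hp]
    simp only [map_sum, map_smul, LinearMap.sum_apply, LinearMap.smul_apply,
      fischer_zonal _ k hhom hharm]
    rw [mul_sum]
    refine sum_congr rfl fun i _ => ?_
    simp only [hp, map_sum, smul_eval, eval_zonal, smul_eq_mul]
    rw [mul_sum, mul_sum, mul_sum]
    refine sum_congr rfl fun j _ => ?_
    simp only [mul_comm (y j _), mul_comm (∑ l, y j l ^ 2)]
    ring
  exact nonneg_of_mul_nonneg_right (hself ▸ fischer_self_nonneg p) (zonalConst_pos hσ k)

end Zonal

section Positivity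

variable {E : Type*} [NormedAddCommGroup E] [InnerProductSpace ℝ E]

lemma inner_sub_inner_smul_self {x : E} (hx : ‖x‖ = 1) (y z : E) :
    inner ℝ (y - inner ℝ x y • x) (z - inner ℝ x z • x) =
      inner ℝ y z - inner ℝ x y * inner ℝ x z := by
  simp [inner_sub_left, inner_sub_right, inner_smul_left, inner_smul_right, hx,
    real_inner_comm x y]

variable [FiniteDimensional ℝ E]

theorem sum_sum_mul_gegenbauer_nonneg (hE : 2 ≤ Module.finrank ℝ E) {ι : Type*} (s : Finset ι)
    (c : ι → ℝ) (y : ι → E) (k : ℕ) :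
    0 ≤ ∑ i ∈ s, ∑ j ∈ s, c i * c j *
      gegenbauer (Module.finrank ℝ E) (inner ℝ (y i) (y j)) (‖y i‖ ^ 2 * ‖y j‖ ^ 2) k := by
  let b := stdOrthonormalBasis ℝ E
  have inner_eq (u v : E) : ∑ l, inner ℝ u (b l) * inner ℝ v (b l) = inner ℝ u v := by
    rw [← b.sum_inner_mul_inner u v]
    exact sum_congr rfl fun l _ => by rw [real_inner_comm (b l) v]
  have normSq_eq (u : E) : ∑ l, inner ℝ u (b l) ^ 2 = ‖u‖ ^ 2 := by
    rw [← real_inner_self_eq_norm_sq, ← inner_eq]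
    exact sum_congr rfl fun l _ => pow_two _
  have hdim : 1 < (Fintype.card (Fin (Module.finrank ℝ E)) : ℝ) := by
    rw [Fintype.card_fin]
    exact_mod_cast hE
  have h := sum_sum_mul_gegenbauer_coord_nonneg hdim s c (fun i l => inner ℝ (y i) (b l)) k
  simpa only [inner_eq, normSq_eq, Fintype.card_fin] using h

lemma sum_sum_gegenbauer_inner_nonneg (hE : 2 ≤ Module.finrank ℝ E) {T : Finset E}
    (hT : ∀ y ∈ T, ‖y‖ = 1) (k : ℕ) :
    0 ≤ ∑ y ∈ T, ∑ z ∈ T, gegenbauer (Module.finrank ℝ E) (inner ℝ y z) 1 k := by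
  refine (sum_sum_mul_gegenbauer_nonneg hE T 1 id k).trans_eq ?_
  refine sum_congr rfl fun y hy => sum_congr rfl fun z hz => ?_
  simp [hT y hy, hT z hz]

lemma sum_sum_mul_gegenbauer_projection_nonneg {n : ℕ} (hn : 2 ≤ n)
    (hE : Module.finrank ℝ E = n + 1) {x : E} (hx : ‖x‖ = 1) {T : Finset E}
    (hT : ∀ y ∈ T, ‖y‖ = 1) (c : E → ℝ) (k : ℕ) :
    0 ≤ ∑ y ∈ T, ∑ z ∈ T, c y * c z *
      gegenbauer n (inner ℝ y z - inner ℝ x y * inner ℝ x z)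
        ((1 - inner ℝ x y ^ 2) * (1 - inner ℝ x z ^ 2)) k := by
  have hx₀ : x ≠ 0 := by rintro rfl; simp at hx
  have : Fact (Module.finrank ℝ E = n + 1) := ⟨hE⟩
  have hdim : Module.finrank ℝ (Submodule.span ℝ {x})ᗮ = n :=
    Submodule.finrank_orthogonal_span_singleton hx₀
  have mem_orthogonal (y : E) : y - inner ℝ x y • x ∈ (Submodule.span ℝ {x})ᗮ := by
    rw [Submodule.mem_orthogonal_singleton_iff_inner_right, inner_sub_right, inner_smul_right,
      real_inner_self_eq_norm_sq, hx]
    ring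
  have normSq_eq {y : E} (hy : y ∈ T) : ‖y - inner ℝ x y • x‖ ^ 2 = 1 - inner ℝ x y ^ 2 := by
    rw [← real_inner_self_eq_norm_sq, inner_sub_inner_smul_self hx, real_inner_self_eq_norm_sq,
      hT y hy]
    ring
  have h := sum_sum_mul_gegenbauer_nonneg (hdim ▸ hn) T c
    (fun y => (⟨_, mem_orthogonal y⟩ : (Submodule.span ℝ {x})ᗮ)) k
  rw [hdim] at h
  refine h.trans_eq (sum_congr rfl fun y hy => sum_congr rfl fun z hz => ?_)
  rw [Submodule.coe_inner, Submodule.coe_norm, Submodule.coe_norm, normSq_eq hy, normSq_eq hz,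
    inner_sub_inner_smul_self hx]

end Positivity

section ThreePointBound

lemma sum_sum_eq_sum_add_sum_offDiag {α : Type*} (S : Finset α) (f : α → α → ℝ) :
    ∑ x ∈ S, ∑ y ∈ S, f x y = ∑ x ∈ S, f x x + ∑ p ∈ S.offDiag, f p.1 p.2 := by
  classical
  rw [← sum_product', ← diag_union_offDiag, sum_union (disjoint_diag_offDiag S), sum_diag]

variable {α : Type*} [DecidableEq α]

/-- The ordered triples of pairwise distinct elements of `S`. -/
def distinctTriples (S : Finset α) : Finset (α × α × α) :=
  {t ∈ S ×ˢ S ×ˢ S | t.1 ≠ t.2.1 ∧ t.1 ≠ t.2.2 ∧ t.2.1 ≠ t.2.2}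

lemma mem_distinctTriples {S : Finset α} {t : α × α × α} : t ∈ distinctTriples S ↔
    (t.1 ∈ S ∧ t.2.1 ∈ S ∧ t.2.2 ∈ S) ∧ t.1 ≠ t.2.1 ∧ t.1 ≠ t.2.2 ∧ t.2.1 ≠ t.2.2 := by
  simp [distinctTriples]

lemma sum_distinctTriples_swap_fst_snd (S : Finset α) (f : α → α → α → ℝ) :
    ∑ t ∈ distinctTriples S, f t.2.1 t.1 t.2.2 = ∑ t ∈ distinctTriples S, f t.1 t.2.1 t.2.2 :=
  sum_nbij' (fun t => (t.2.1, t.1, t.2.2)) (fun t => (t.2.1, t.1, t.2.2))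
    (by simp only [mem_distinctTriples]; tauto) (by simp only [mem_distinctTriples]; tauto)
    (fun _ _ => rfl) (fun _ _ => rfl) (fun _ _ => rfl)

lemma sum_distinctTriples_swap_snd_trd (S : Finset α) (f : α → α → α → ℝ) :
    ∑ t ∈ distinctTriples S, f t.1 t.2.2 t.2.1 = ∑ t ∈ distinctTriples S, f t.1 t.2.1 t.2.2 :=
  sum_nbij' (fun t => (t.1, t.2.2, t.2.1)) (fun t => (t.1, t.2.2, t.2.1))
    (by simp only [mem_distinctTriples]; tauto) (by simp only [mem_distinctTriples]; tauto)
    (fun _ _ => rfl) (fun _ _ => rfl) (fun _ _ => rfl)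

lemma sum_distinctTriples_eq_sum_sum_offDiag (S : Finset α) (f : α → α → α → ℝ) :
    ∑ t ∈ distinctTriples S, f t.1 t.2.1 t.2.2 =
      ∑ x ∈ S, ∑ p ∈ (S.erase x).offDiag, f x p.1 p.2 :=
  sum_finset_product' (distinctTriples S) S (fun x => (S.erase x).offDiag)
    (fun t => by simp only [mem_distinctTriples, mem_offDiag, mem_erase]; tauto)
    (f := fun x p => f x p.1 p.2)

lemma sum_distinctTriples_snd_trd (S : Finset α) (f : α → α → ℝ) :
    ∑ t ∈ distinctTriples S, f t.2.1 t.2.2 =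
      ((S.card : ℝ) - 2) * ∑ p ∈ S.offDiag, f p.1 p.2 := by
  have hcard {p : α × α} (hp : p ∈ S.offDiag) :
      (((S.erase p.1).erase p.2).card : ℝ) = S.card - 2 := by
    obtain ⟨h₁, h₂, hne⟩ := mem_offDiag.1 hp
    rw [cast_card_erase_of_mem (mem_erase.2 ⟨hne.symm, h₂⟩), cast_card_erase_of_mem h₁]
    ring
  rw [sum_finset_product_right (distinctTriples S) S.offDiag (fun p => (S.erase p.1).erase p.2)
    (fun t => by simp only [mem_distinctTriples, mem_offDiag, mem_erase]; tauto), mul_sum]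
  refine sum_congr rfl fun p hp => ?_
  change ∑ _x ∈ _, f p.1 p.2 = _
  rw [sum_const, nsmul_eq_mul, hcard hp]

variable {E : Type*} [NormedAddCommGroup E] [InnerProductSpace ℝ E] {S : Finset E}
  {A h : ℝ → ℝ} {G : ℝ → ℝ → ℝ → ℝ} {c : ℝ}

lemma sum_distinctTriples_le_sum_offDiag [DecidableEq E]
    (htriple : ∀ t ∈ distinctTriples S,
      G (inner ℝ t.1 t.2.1) (inner ℝ t.1 t.2.2) (inner ℝ t.2.1 t.2.2) +
      G (inner ℝ t.1 t.2.1) (inner ℝ t.2.1 t.2.2) (inner ℝ t.1 t.2.2) +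
      G (inner ℝ t.1 t.2.2) (inner ℝ t.2.1 t.2.2) (inner ℝ t.1 t.2.1) ≤
      h (inner ℝ t.1 t.2.1) + h (inner ℝ t.1 t.2.2) + h (inner ℝ t.2.1 t.2.2)) :
    ∑ t ∈ distinctTriples S,
      G (inner ℝ t.1 t.2.1) (inner ℝ t.1 t.2.2) (inner ℝ t.2.1 t.2.2) ≤
      ((S.card : ℝ) - 2) * ∑ p ∈ S.offDiag, h (inner ℝ p.1 p.2) := by
  let g (x y z : E) : ℝ := G (inner ℝ x y) (inner ℝ x z) (inner ℝ y z)
  have hg₂ : ∑ t ∈ distinctTriples S,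
      G (inner ℝ t.1 t.2.1) (inner ℝ t.2.1 t.2.2) (inner ℝ t.1 t.2.2) =
      ∑ t ∈ distinctTriples S, g t.1 t.2.1 t.2.2 := by
    rw [← sum_distinctTriples_swap_fst_snd S g]
    exact sum_congr rfl fun t _ => by rw [real_inner_comm t.2.1 t.1]
  have hg₃ : ∑ t ∈ distinctTriples S,
      G (inner ℝ t.1 t.2.2) (inner ℝ t.2.1 t.2.2) (inner ℝ t.1 t.2.1) =
      ∑ t ∈ distinctTriples S, g t.1 t.2.1 t.2.2 := by
    rw [← hg₂, ← sum_distinctTriples_swap_snd_trd S fun x y z =>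
      G (inner ℝ x y) (inner ℝ y z) (inner ℝ x z)]
    exact sum_congr rfl fun t _ => by rw [real_inner_comm t.2.2 t.2.1]
  have hh₃ := sum_distinctTriples_snd_trd S fun y z => h (inner ℝ y z)
  have hh₂ := sum_distinctTriples_swap_fst_snd S fun x _ z => h (inner ℝ x z)
  have hh₁ := sum_distinctTriples_swap_snd_trd S fun x y _ => h (inner ℝ x y)
  have hle := sum_le_sum htriple
  simp only [sum_add_distrib] at hle
  linarith

theorem mul_card_sub_one_le_of_three_point (hS : S.Nonempty) (hunit : ∀ x ∈ S, ‖x‖ = 1)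
    (hA : 0 ≤ ∑ x ∈ S, ∑ y ∈ S, A (inner ℝ x y))
    (hG : ∀ x ∈ S, ∀ T ⊆ S, 0 ≤ ∑ y ∈ T, ∑ z ∈ T, G (inner ℝ x y) (inner ℝ x z) (inner ℝ y z))
    (htriple : ∀ x ∈ S, ∀ y ∈ S, ∀ z ∈ S, x ≠ y → x ≠ z → y ≠ z →
      G (inner ℝ x y) (inner ℝ x z) (inner ℝ y z) + G (inner ℝ x y) (inner ℝ y z) (inner ℝ x z) +
        G (inner ℝ x z) (inner ℝ y z) (inner ℝ x y) ≤
      h (inner ℝ x y) + h (inner ℝ x z) + h (inner ℝ y z))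
    (hpair : ∀ x ∈ S, ∀ y ∈ S, x ≠ y →
      A (inner ℝ x y) + G (inner ℝ x y) (inner ℝ x y) 1 + (S.card - 2) * h (inner ℝ x y) ≤ -c) :
    c * (S.card - 1) ≤ A 1 := by
  classical
  have inner_self {x : E} (hx : x ∈ S) : inner ℝ x x = (1 : ℝ) := by
    rw [real_inner_self_eq_norm_sq, hunit x hx, one_pow]
  have hA_split : 0 ≤ S.card * A 1 + ∑ p ∈ S.offDiag, A (inner ℝ p.1 p.2) := by
    rw [sum_sum_eq_sum_add_sum_offDiag, sum_congr rfl fun x hx => by rw [inner_self hx],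
      sum_const, nsmul_eq_mul] at hA
    exact hA
  have hG_split : 0 ≤ ∑ p ∈ S.offDiag, G (inner ℝ p.1 p.2) (inner ℝ p.1 p.2) 1 +
      ∑ t ∈ distinctTriples S,
        G (inner ℝ t.1 t.2.1) (inner ℝ t.1 t.2.2) (inner ℝ t.2.1 t.2.2) := by
    rw [sum_distinctTriples_eq_sum_sum_offDiag S fun x y z =>
        G (inner ℝ x y) (inner ℝ x z) (inner ℝ y z),
      sum_finset_product' S.offDiag S (fun x => S.erase x)
        (fun p => by simp only [mem_offDiag, mem_erase]; tauto)
        (f := fun x y => G (inner ℝ x y) (inner ℝ x y) 1), ← sum_add_distrib]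
    refine sum_nonneg fun x hx => (hG x hx (S.erase x) (erase_subset x S)).trans_eq ?_
    rw [sum_sum_eq_sum_add_sum_offDiag]
    congr 1
    exact sum_congr rfl fun y hy => by rw [inner_self (mem_of_mem_erase hy)]
  have hG_le := sum_distinctTriples_le_sum_offDiag (S := S) (G := G) (h := h) fun t ht => by
    obtain ⟨⟨hx, hy, hz⟩, hxy, hxz, hyz⟩ := mem_distinctTriples.1 ht
    exact htriple _ hx _ hy _ hz hxy hxz hyz
  have hpair_sum := sum_le_sum fun (p : E × E) (hp : p ∈ S.offDiag) =>
    hpair _ (mem_offDiag.1 hp).1 _ (mem_offDiag.1 hp).2.1 (mem_offDiag.1 hp).2.2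
  rw [sum_add_distrib, sum_add_distrib, ← mul_sum, sum_const, offDiag_card, nsmul_eq_mul,
    Nat.cast_sub (Nat.le_mul_self _), Nat.cast_mul] at hpair_sum
  have hcard : (0 : ℝ) < S.card := by exact_mod_cast hS.card_pos
  refine le_of_mul_le_mul_left ?_ hcard
  linarith

end ThreePointBound

section Inner

variable {E : Type*} [NormedAddCommGroup E] [InnerProductSpace ℝ E] {x y z : E}

lemma neg_one_le_inner (hx : ‖x‖ = 1) (hy : ‖y‖ = 1) : -1 ≤ inner ℝ x y := by
  simpa [hx, hy] using neg_le_of_abs_le (abs_real_inner_le_norm x y)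

lemma inner_le_half_of_one_le_dist (hx : ‖x‖ = 1) (hy : ‖y‖ = 1) (hdist : 1 ≤ dist x y) :
    inner ℝ x y ≤ 1 / 2 := by
  have h := norm_sub_sq_real x y
  rw [dist_eq_norm] at hdist
  rw [hx, hy] at h
  nlinarith

/-- The Gram determinant of three unit vectors with pairwise inner products `u`, `v`, `t`. -/
def gramDet (u v t : ℝ) : ℝ := 1 + 2 * u * v * t - u ^ 2 - v ^ 2 - t ^ 2

lemma gramDet_inner_nonneg (hx : ‖x‖ = 1) (hy : ‖y‖ = 1) (hz : ‖z‖ = 1) :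
    0 ≤ gramDet (inner ℝ x y) (inner ℝ x z) (inner ℝ y z) := by
  have h := real_inner_mul_inner_self_le (y - inner ℝ x y • x) (z - inner ℝ x z • x)
  simp only [inner_sub_inner_smul_self hx, real_inner_self_eq_norm_sq, hy, hz] at h
  rw [gramDet]
  linarith

end Inner

section PackedFields

/-- The `i`-th digit of `X` in base `2 ^ w`: a natural number is read as an array of `w`-bit words,
so that one operation on numbers acts on all entries of a coefficient tensor at once. -/
def field (w X i : ℕ) : ℕ := X / 2 ^ (w * i) % 2 ^ w

lemma field_lt (w X i : ℕ) : field w X i < 2 ^ w := Nat.mod_lt _ (by positivity)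

lemma field_zero (w i : ℕ) : field w 0 i = 0 := by simp [field]

lemma field_eq_zero_of_lt {w X s i : ℕ} (hX : X < 2 ^ (w * s)) (h : s ≤ i) : field w X i = 0 := by
  rw [field, Nat.div_eq_of_lt, Nat.zero_mod]
  exact hX.trans_le (Nat.pow_le_pow_right two_pos (Nat.mul_le_mul_left w h))

lemma testBit_field (w X i b : ℕ) :
    (field w X i).testBit b = (decide (b < w) && X.testBit (w * i + b)) := by
  rw [field, Nat.testBit_mod_two_pow, Nat.testBit_div_two_pow, Nat.add_comm]

lemma field_land (w X Y i : ℕ) : field w (X &&& Y) i = field w X i &&& field w Y i := by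
  refine Nat.eq_of_testBit_eq fun b => ?_
  simp only [testBit_field, Nat.testBit_land]
  cases decide (b < w) <;> simp

lemma field_lor (w X Y i : ℕ) : field w (X ||| Y) i = field w X i ||| field w Y i := by
  refine Nat.eq_of_testBit_eq fun b => ?_
  simp only [testBit_field, Nat.testBit_lor]
  cases decide (b < w) <;> simp

lemma field_shiftRight (w X s i : ℕ) : field w (X >>> (w * s)) i = field w X (i + s) := by
  rw [field, field, Nat.shiftRight_eq_div_pow, Nat.div_div_eq_div_mul, ← pow_add, ← Nat.mul_add,
    Nat.add_comm]

lemma field_shiftLeft (w X s i : ℕ) :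
    field w (X <<< (w * s)) i = if i < s then 0 else field w X (i - s) := by
  split_ifs with h
  · rw [field, Nat.shiftLeft_eq, show w * s = w * i + w * (s - i - 1) + w by
      obtain ⟨k, rfl⟩ := Nat.exists_eq_add_of_lt h
      rw [show i + k + 1 - i - 1 = k by omega]
      ring, pow_add, pow_add, show ∀ a b c : ℕ, X * (a * b * c) = a * (X * b * c) by intros; ring,
      Nat.mul_div_cancel_left _ (by positivity), Nat.mul_mod_left]
  · rw [field, field, Nat.shiftLeft_eq, show w * i = w * s + w * (i - s) by
      rw [← Nat.mul_add, Nat.add_sub_cancel' (not_lt.1 h)], pow_add, ← Nat.div_div_eq_div_mul,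
      Nat.mul_div_cancel _ (by positivity)]

lemma field_add {w X Y : ℕ} (h : ∀ i, field w X i + field w Y i < 2 ^ w) (i : ℕ) :
    field w (X + Y) i = field w X i + field w Y i := by
  have no_carry (i : ℕ) : X % 2 ^ (w * i) + Y % 2 ^ (w * i) < 2 ^ (w * i) := by
    induction i with
    | zero => simp [Nat.mod_one]
    | succ i ih =>
      have hi := Nat.mul_le_mul_left (2 ^ (w * i)) (Nat.succ_le_of_lt (h i))
      rw [field, field, Nat.succ_eq_add_one, Nat.mul_add, Nat.mul_add] at hi
      rw [Nat.mul_succ, pow_add, Nat.mod_mul, Nat.mod_mul]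
      omega
  rw [field, Nat.add_div_eq_of_add_mod_lt (no_carry i)]
  exact Nat.add_mod_of_add_mod_lt (h i)

lemma field_add_shiftLeft {w X s : ℕ} (hX : X < 2 ^ (w * s)) (Y i : ℕ) :
    field w (X + Y <<< (w * s)) i = if i < s then field w X i else field w Y (i - s) := by
  have hsum (i : ℕ) : field w X i + field w (Y <<< (w * s)) i =
      if i < s then field w X i else field w Y (i - s) := by
    rw [field_shiftLeft]
    split_ifs with h
    · rfl
    · rw [field_eq_zero_of_lt hX (not_lt.1 h), Nat.zero_add]
  rw [field_add (fun i => ?_), hsum]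
  rw [hsum]
  split_ifs <;> exact field_lt _ _ _

lemma field_half {w mask i : ℕ} (hmask : field (w + 1) mask i = 2 ^ w - 1) (X : ℕ) :
    field (w + 1) ((X >>> 1) &&& mask) i = field (w + 1) X i / 2 := by
  rw [field_land, hmask]
  refine Nat.eq_of_testBit_eq fun b => ?_
  rw [Nat.testBit_land, Nat.testBit_two_pow_sub_one, testBit_field, Nat.testBit_shiftRight,
    Nat.testBit_div_two, testBit_field, show 1 + ((w + 1) * i + b) = (w + 1) * i + (b + 1) by ring]
  by_cases hb : b < w
  · simp [hb, hb.trans w.lt_succ_self]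
  · simp [hb]

/-- The number `∑ i < n, 2 ^ (w * i)`, whose first `n` fields of width `w` are `1`. -/
def repunit (w n : ℕ) : ℕ := Nat.div (Nat.sub (Nat.pow 2 (Nat.mul w n)) 1) (Nat.sub (Nat.pow 2 w) 1)

lemma repunit_eq_sum {w : ℕ} (hw : 0 < w) (n : ℕ) :
    repunit w n = ∑ i ∈ range n, (2 ^ w) ^ i := by
  rw [Nat.geomSum_eq (Nat.le_self_pow hw.ne' 2), ← pow_mul]
  rfl

lemma repunit_succ {w : ℕ} (hw : 0 < w) (n : ℕ) :
    repunit w (n + 1) = 1 + repunit w n <<< w := by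
  rw [repunit_eq_sum hw, repunit_eq_sum hw, sum_range_succ', Nat.shiftLeft_eq, sum_mul, pow_zero,
    add_comm]
  simp only [pow_succ]

lemma field_mul_repunit {w X s : ℕ} (hw : 0 < w) (hs : 0 < s) (hX : X < 2 ^ (w * s)) (n i : ℕ) :
    field w (X * repunit (w * s) n) i = if i / s < n then field w X (i % s) else 0 := by
  induction n generalizing i with
  | zero => simp [repunit_eq_sum (Nat.mul_pos hw hs), field_zero]
  | succ n ih =>
    rw [repunit_succ (Nat.mul_pos hw hs), Nat.mul_add, Nat.mul_one, Nat.shiftLeft_eq,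
      ← Nat.mul_assoc, ← Nat.shiftLeft_eq, field_add_shiftLeft hX]
    split_ifs with h₁ h₂ h₂
    · rw [Nat.mod_eq_of_lt h₁]
    · simp [Nat.div_eq_of_lt h₁] at h₂
    all_goals
      have hdiv : i / s = (i - s) / s + 1 := Nat.div_eq_sub_div hs (not_lt.1 h₁)
      rw [ih, ← Nat.mod_eq_sub_mod (not_lt.1 h₁)]
    · exact if_pos (by omega)
    · exact if_neg (by omega)

lemma field_mul_repunit_one {w a : ℕ} (hw : 0 < w) (ha : a < 2 ^ w) (n i : ℕ) :
    field w (a * repunit w n) i = if i < n then a else 0 := by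
  have h := field_mul_repunit (s := 1) hw one_pos (by rwa [Nat.mul_one]) n i
  rw [Nat.mul_one, Nat.div_one, Nat.mod_one] at h
  rw [h, field, Nat.mul_zero, pow_zero, Nat.div_one, Nat.mod_eq_of_lt ha]

lemma mul_repunit_lt {w : ℕ} (hw : 0 < w) (n : ℕ) : (2 ^ w - 1) * repunit w n < 2 ^ (w * n) := by
  rw [repunit_eq_sum hw, Nat.geomSum_eq (Nat.le_self_pow hw.ne' 2), ← pow_mul]
  exact (Nat.mul_div_le _ _).trans_lt (Nat.sub_lt (by positivity) one_pos)

end PackedFields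

section BernsteinForm

/-- The polynomial of degree `n` with Bernstein coefficients `c 0, …, c n`, evaluated at `x` by the
recursion of de Casteljau. -/
def bernsteinForm : ℕ → ℝ → (ℕ → ℝ) → ℝ
  | 0, _, c => c 0
  | n + 1, x, c => (1 - x) * bernsteinForm n x c + x * bernsteinForm n x fun i => c (i + 1)

lemma bernsteinForm_add (n : ℕ) (x : ℝ) (c d : ℕ → ℝ) :
    bernsteinForm n x (fun i => c i + d i) = bernsteinForm n x c + bernsteinForm n x d := by
  induction n generalizing c d with
  | zero => rfl
  | succ n ih => simp only [bernsteinForm, ih]; ring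

lemma bernsteinForm_const_mul (n : ℕ) (x a : ℝ) (c : ℕ → ℝ) :
    bernsteinForm n x (fun i => a * c i) = a * bernsteinForm n x c := by
  induction n generalizing c with
  | zero => rfl
  | succ n ih => simp only [bernsteinForm, ih]; ring

lemma bernsteinForm_const (n : ℕ) (x a : ℝ) : bernsteinForm n x (fun _ => a) = a := by
  induction n with
  | zero => rfl
  | succ n ih => simp only [bernsteinForm, ih]; ring

lemma bernsteinForm_mono {n : ℕ} {x : ℝ} {c d : ℕ → ℝ} (hx : x ∈ Set.Icc (0 : ℝ) 1)
    (h : ∀ i ≤ n, c i ≤ d i) : bernsteinForm n x c ≤ bernsteinForm n x d := by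
  induction n generalizing c d with
  | zero => exact h 0 le_rfl
  | succ n ih =>
    exact add_le_add
      (mul_le_mul_of_nonneg_left (ih fun i hi => h i (by omega)) (sub_nonneg.2 hx.2))
      (mul_le_mul_of_nonneg_left (ih fun i hi => h (i + 1) (by omega)) hx.1)

lemma bernsteinForm_comm (n m : ℕ) (x y : ℝ) (c : ℕ → ℕ → ℝ) :
    (bernsteinForm n x fun i => bernsteinForm m y fun j => c i j) =
      bernsteinForm m y fun j => bernsteinForm n x fun i => c i j := by
  induction n generalizing c with
  | zero => rfl
  | succ n ih =>
    simp only [bernsteinForm]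
    rw [ih, ih fun i j => c (i + 1) j, bernsteinForm_add, bernsteinForm_const_mul,
      bernsteinForm_const_mul]

/-- A triangular array each of whose rows is dominated by the averages of neighbouring entries of
the row above it: the midpoint subdivision scheme of de Casteljau with rounding towards `-∞`. -/
def IsSubaverageTriangle (n : ℕ) (a : ℕ → ℕ → ℝ) : Prop :=
  ∀ r i, r + i + 1 ≤ n → a (r + 1) i ≤ (a r i + a r (i + 1)) / 2

namespace IsSubaverageTriangle

variable {n : ℕ} {a : ℕ → ℕ → ℝ} {x : ℝ}

lemma bernsteinForm_one_le (ha : IsSubaverageTriangle (n + 1) a) (hx : x ∈ Set.Icc (0 : ℝ) 1) :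
    bernsteinForm n x (a 1) ≤
      1 / 2 * bernsteinForm n x (a 0) + 1 / 2 * bernsteinForm n x fun i => a 0 (i + 1) := by
  rw [← bernsteinForm_const_mul, ← bernsteinForm_const_mul, ← bernsteinForm_add]
  refine bernsteinForm_mono hx fun i hi => ?_
  linarith [ha 0 i (by omega)]

lemma bernsteinForm_left_le (ha : IsSubaverageTriangle n a) (h₀ : 0 ≤ x) (h₁ : x ≤ 1 / 2) :
    bernsteinForm n (2 * x) (fun r => a r 0) ≤ bernsteinForm n x (a 0) := by
  induction n generalizing a with
  | zero => exact le_rfl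
  | succ n ih =>
    have hfirst := ih fun r i hri => ha r i (by omega)
    have hsecond := (ih (a := fun r => a (r + 1)) fun r i hri => ha (r + 1) i (by omega)).trans
      (ha.bernsteinForm_one_le ⟨h₀, by linarith⟩)
    simp only [bernsteinForm]
    linarith [mul_le_mul_of_nonneg_left hfirst (by linarith : 0 ≤ 1 - 2 * x),
      mul_le_mul_of_nonneg_left hsecond (by linarith : 0 ≤ 2 * x)]

lemma bernsteinForm_right_le (ha : IsSubaverageTriangle n a) (h₀ : 1 / 2 ≤ x) (h₁ : x ≤ 1) :
    bernsteinForm n (2 * x - 1) (fun i => a (n - i) i) ≤ bernsteinForm n x (a 0) := by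
  induction n generalizing a with
  | zero => exact le_rfl
  | succ n ih =>
    have hindex : bernsteinForm n (2 * x - 1) (fun i => a (n + 1 - i) i) ≤
        bernsteinForm n (2 * x - 1) fun i => a (n - i + 1) i :=
      bernsteinForm_mono ⟨by linarith, by linarith⟩ fun i hi => by
        rw [show n + 1 - i = n - i + 1 by omega]
    have hfirst := hindex.trans <| (ih (a := fun r => a (r + 1)) fun r i hri =>
      ha (r + 1) i (by omega)).trans (ha.bernsteinForm_one_le ⟨by linarith, h₁⟩)
    have hsecond := ih (a := fun r i => a r (i + 1)) fun r i hri => ha r (i + 1) (by omega)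
    simp only [bernsteinForm, Nat.add_sub_add_right]
    linarith [mul_le_mul_of_nonneg_left hfirst (by linarith : 0 ≤ 1 - (2 * x - 1)),
      mul_le_mul_of_nonneg_left hsecond (by linarith : 0 ≤ 2 * x - 1)]

end IsSubaverageTriangle

end BernsteinForm

section Subdivision

/-- Every 64-bit field of `X` has its top bit clear, so that two such arrays add without carries. -/
def IsWordArray (X : ℕ) : Prop := ∀ i, field 64 X i < 2 ^ 63

namespace IsWordArray

variable {X Y : ℕ}

lemma zero : IsWordArray 0 := fun i => by rw [field_zero]; norm_num

lemma lor (hX : IsWordArray X) (hY : IsWordArray Y) : IsWordArray (X ||| Y) := fun i => by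
  rw [field_lor]
  exact Nat.or_lt_two_pow (hX i) (hY i)

lemma land_left (hX : IsWordArray X) (Y : ℕ) : IsWordArray (X &&& Y) := fun i => by
  rw [field_land]
  exact Nat.and_le_left.trans_lt (hX i)

lemma land_right (hY : IsWordArray Y) (X : ℕ) : IsWordArray (X &&& Y) := by
  rw [Nat.land_comm]
  exact hY.land_left X

lemma shiftLeft (hX : IsWordArray X) (s : ℕ) : IsWordArray (X <<< (64 * s)) := fun i => by
  rw [field_shiftLeft]
  split_ifs
  · norm_num
  · exact hX _

end IsWordArray

/-- The position of one axis inside a packed array of coefficients: along the axis the array has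
`degree + 1` entries at distance `stride`, and such slices fill `blocks` consecutive blocks. -/
structure AxisLayout where
  stride : ℕ
  degree : ℕ
  blocks : ℕ

namespace AxisLayout

variable (A : AxisLayout)

/-- The number of fields of an array with layout `A`. -/
def size : ℕ := A.stride * (A.degree + 1) * A.blocks

/-- The coordinate along the axis of the field with index `i`. -/
def coord (i : ℕ) : ℕ := i / A.stride % (A.degree + 1)

/-- The array whose fields are all `2 ^ 63 - 1`. -/
def wordMask : ℕ := (2 ^ 63 - 1) * repunit 64 A.size

/-- The array whose fields are `2 ^ 64 - 1` at coordinate `0` and `0` elsewhere. -/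
def slabMask : ℕ :=
  (2 ^ 64 - 1) * repunit 64 A.stride * repunit (64 * (A.stride * (A.degree + 1))) A.blocks

/-- The averages, rounded down, of neighbouring entries along the axis. -/
def average (X : ℕ) : ℕ := ((X + X >>> (64 * A.stride)) >>> 1) &&& A.wordMask

/-- The first `k` coefficients of the left half in the subdivision scheme of de Casteljau. -/
def leftCoeffs : ℕ → ℕ → ℕ
  | 0, _ => 0
  | k + 1, X => (X &&& A.slabMask) ||| (leftCoeffs k (A.average X)) <<< (64 * A.stride)

/-- The first `k` coefficients of the right half in the subdivision scheme of de Casteljau applied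
to the polynomial of degree `k - 1`. -/
def rightCoeffs : ℕ → ℕ → ℕ
  | 0, _ => 0
  | k + 1, X => (X &&& A.slabMask <<< (64 * (A.stride * k))) ||| rightCoeffs k (A.average X)

/-- Lower bounds for the coefficients on the left half of the axis. -/
def left (X : ℕ) : ℕ := A.leftCoeffs (A.degree + 1) X

/-- Lower bounds for the coefficients on the right half of the axis. -/
def right (X : ℕ) : ℕ := A.rightCoeffs (A.degree + 1) X

variable {A}

lemma field_wordMask (i : ℕ) :
    field 64 A.wordMask i = if i < A.size then 2 ^ 63 - 1 else 0 :=
  field_mul_repunit_one (by norm_num) (by norm_num) _ _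

lemma isWordArray_average (X : ℕ) : IsWordArray (A.average X) :=
  IsWordArray.land_right (fun i => by rw [field_wordMask]; split_ifs <;> norm_num) _

lemma isWordArray_leftCoeffs (k : ℕ) {X : ℕ} (hX : IsWordArray X) :
    IsWordArray (A.leftCoeffs k X) := by
  induction k generalizing X with
  | zero => exact .zero
  | succ k ih => exact (hX.land_left _).lor ((ih (isWordArray_average X)).shiftLeft _)

lemma isWordArray_rightCoeffs (k : ℕ) {X : ℕ} (hX : IsWordArray X) :
    IsWordArray (A.rightCoeffs k X) := by
  induction k generalizing X with
  | zero => exact .zero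
  | succ k ih => exact (hX.land_left _).lor (ih (isWordArray_average X))

lemma isWordArray_iterate_average (r : ℕ) {X : ℕ} (hX : IsWordArray X) :
    IsWordArray (A.average^[r] X) := by
  cases r with
  | zero => exact hX
  | succ r =>
    rw [Function.iterate_succ_apply']
    exact isWordArray_average _

lemma field_average {X i : ℕ} (hX : IsWordArray X) (hi : i < A.size) :
    field 64 (A.average X) i = (field 64 X i + field 64 X (i + A.stride)) / 2 := by
  have hhalf := field_half (w := 63) (by rw [field_wordMask, if_pos hi])
    (X + X >>> (64 * A.stride))
  rw [field_add, field_shiftRight] at hhalf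
  · exact hhalf
  · intro j
    rw [field_shiftRight]
    have h₁ : field (63 + 1) X j < 2 ^ 63 := hX j
    have h₂ : field (63 + 1) X (j + A.stride) < 2 ^ 63 := hX (j + A.stride)
    omega

lemma isSubaverageTriangle_iterate_average {X b : ℕ} (hX : IsWordArray X)
    (hb : b + A.stride * A.degree < A.size) :
    IsSubaverageTriangle A.degree fun r i =>
      (field 64 (A.average^[r] X) (b + A.stride * i) : ℝ) := by
  intro r i hri
  have hi : A.stride * i ≤ A.stride * A.degree := Nat.mul_le_mul_left _ (by omega)
  beta_reduce
  rw [Function.iterate_succ_apply', field_average (isWordArray_iterate_average r hX) (by omega),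
    Nat.mul_succ, ← Nat.add_assoc]
  exact_mod_cast Nat.cast_div_le

variable (hA : 0 < A.stride)
include hA

lemma coord_sub_stride_mul {i r : ℕ} (h : A.stride * r ≤ i) (hr : r ≤ A.degree) :
    A.coord (i - A.stride * r) = 0 ↔ A.coord i = r := by
  have hle : r ≤ i / A.stride := by rwa [Nat.le_div_iff_mul_le hA, Nat.mul_comm]
  rw [coord, coord, Nat.sub_mul_div, ← Nat.dvd_iff_mod_eq_zero, ← Nat.modEq_iff_dvd' hle,
    Nat.ModEq, Nat.mod_eq_of_lt (Nat.lt_succ_of_le hr), eq_comm]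

lemma coord_lt_of_lt_stride_mul {i r : ℕ} (h : i < A.stride * r) : A.coord i < r :=
  (Nat.mod_le _ _).trans_lt (by rwa [Nat.div_lt_iff_lt_mul hA, Nat.mul_comm])

lemma coord_sub_stride {i : ℕ} (h : A.stride ≤ i) :
    A.coord (i - A.stride) = (A.coord i + A.degree) % (A.degree + 1) := by
  obtain ⟨j, rfl⟩ := Nat.exists_eq_add_of_le' h
  rw [coord, coord, Nat.add_sub_cancel, Nat.add_div_right _ hA, Nat.mod_add_mod, Nat.succ_add,
    ← Nat.add_succ, Nat.add_mod_right]

lemma coord_add_stride_mul {b i : ℕ} (hb : A.coord b = 0) (hi : i ≤ A.degree) :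
    A.coord (b + A.stride * i) = i := by
  rw [← coord_sub_stride_mul hA (Nat.le_add_left _ _) hi, Nat.add_sub_cancel, hb]

lemma field_slabMask {i : ℕ} (hi : i < A.size) :
    field 64 A.slabMask i = if A.coord i = 0 then 2 ^ 64 - 1 else 0 := by
  have hslab := mul_repunit_lt (w := 64) (by norm_num) A.stride
  have hn : 0 < A.stride * (A.degree + 1) := Nat.mul_pos hA A.degree.succ_pos
  rw [slabMask, field_mul_repunit (by norm_num) hn (hslab.trans_le (Nat.pow_le_pow_right two_pos
    (Nat.mul_le_mul_left _ (Nat.le_mul_of_pos_right _ A.degree.succ_pos)))),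
    if_pos ((Nat.div_lt_iff_lt_mul hn).2 (by rwa [Nat.mul_comm])),
    field_mul_repunit_one (by norm_num) (by norm_num)]
  have hiff : i % (A.stride * (A.degree + 1)) < A.stride ↔ A.coord i = 0 := by
    rw [← Nat.div_eq_zero_iff_lt hA, Nat.mod_mul_right_div_self]
    rfl
  simp only [hiff]

lemma field_land_slabMask_shiftLeft {X i r : ℕ} (hi : i < A.size) (hr : r ≤ A.degree) :
    field 64 (X &&& A.slabMask <<< (64 * (A.stride * r))) i =
      if A.coord i = r then field 64 X i else 0 := by
  rw [field_land, field_shiftLeft]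
  by_cases h : i < A.stride * r
  · rw [if_pos h, if_neg (coord_lt_of_lt_stride_mul hA h).ne, Nat.and_zero]
  · rw [if_neg h, field_slabMask hA (by omega)]
    simp only [coord_sub_stride_mul hA (not_lt.1 h) hr]
    split_ifs
    · rw [Nat.and_two_pow_sub_one_eq_mod, Nat.mod_eq_of_lt (field_lt _ _ _)]
    · exact Nat.and_zero _

lemma field_rightCoeffs {k X i : ℕ} (hk : k ≤ A.degree + 1) (hi : i < A.size) :
    field 64 (A.rightCoeffs k X) i =
      if A.coord i < k then field 64 (A.average^[k - 1 - A.coord i] X) i else 0 := by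
  induction k generalizing X with
  | zero => simp [rightCoeffs, field_zero]
  | succ k ih =>
    rw [rightCoeffs, field_lor, field_land_slabMask_shiftLeft hA hi (by omega), ih (by omega)]
    rcases lt_trichotomy (A.coord i) k with h | h | h
    · rw [if_neg h.ne, if_pos h, if_pos (by omega), Nat.zero_or, ← Function.iterate_succ_apply]
      congr 3
      omega
    · rw [if_pos h, if_neg h.not_lt, if_pos (by omega), Nat.or_zero, h]
      simp
    · rw [if_neg h.ne', if_neg (by omega), if_neg (by omega), Nat.zero_or]

lemma field_leftCoeffs {k X i : ℕ} (hk : k ≤ A.degree + 1) (hi : i < A.size) :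
    field 64 (A.leftCoeffs k X) i =
      if A.coord i < k then field 64 (A.average^[A.coord i] X) (i - A.stride * A.coord i)
      else 0 := by
  induction k generalizing X i with
  | zero => simp [leftCoeffs, field_zero]
  | succ k ih =>
    have hslab := field_land_slabMask_shiftLeft hA (X := X) hi (Nat.zero_le _)
    rw [Nat.mul_zero, Nat.mul_zero, Nat.shiftLeft_zero] at hslab
    rw [leftCoeffs, field_lor, hslab, field_shiftLeft]
    by_cases h : A.coord i = 0
    · rw [if_pos h, h, if_pos k.succ_pos, Nat.mul_zero, Nat.sub_zero]
      split_ifs with hlt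
      · exact Nat.or_zero _
      · rw [ih (by omega) (by omega), coord_sub_stride hA (not_lt.1 hlt), h, Nat.zero_add,
          Nat.mod_eq_of_lt A.degree.lt_succ_self, if_neg (by omega), Nat.or_zero]
        rfl
    · obtain ⟨c, hc⟩ := Nat.exists_eq_succ_of_ne_zero h
      have hle : A.stride ≤ i := by
        by_contra hlt
        exact h (Nat.lt_one_iff.1 (coord_lt_of_lt_stride_mul hA (by omega)))
      have hcoord : A.coord (i - A.stride) = c := by
        have hlt : A.coord i < A.degree + 1 := Nat.mod_lt _ A.degree.succ_pos
        rw [coord_sub_stride hA hle, hc, show c.succ + A.degree = c + (A.degree + 1) by omega,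
          Nat.add_mod_right, Nat.mod_eq_of_lt (by omega)]
      rw [if_neg h, if_neg hle.not_gt, ih (by omega) (by omega), hcoord, hc, Nat.zero_or,
        Function.iterate_succ_apply, Nat.mul_succ, Nat.sub_sub, Nat.add_comm A.stride]
      simp only [Nat.succ_lt_succ_iff, Nat.succ_eq_add_one]

variable {X b : ℕ} {x : ℝ} (hX : IsWordArray X) (hb : A.coord b = 0)
  (hbound : b + A.stride * A.degree < A.size)
include hX hb hbound

lemma bernsteinForm_left_le (h₀ : 0 ≤ x) (h₁ : x ≤ 1 / 2) :
    (bernsteinForm A.degree (2 * x) fun i => (field 64 (A.left X) (b + A.stride * i) : ℝ)) ≤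
      bernsteinForm A.degree x fun i => (field 64 X (b + A.stride * i) : ℝ) := by
  refine (bernsteinForm_mono ⟨by linarith, by linarith⟩ fun i hi => le_of_eq ?_).trans
    ((isSubaverageTriangle_iterate_average hX hbound).bernsteinForm_left_le h₀ h₁)
  have hlt : A.stride * i ≤ A.stride * A.degree := Nat.mul_le_mul_left _ hi
  rw [left, field_leftCoeffs hA le_rfl (by omega), coord_add_stride_mul hA hb hi,
    if_pos (by omega), Nat.add_sub_cancel, Nat.mul_zero, Nat.add_zero]

lemma bernsteinForm_right_le (h₀ : 1 / 2 ≤ x) (h₁ : x ≤ 1) :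
    (bernsteinForm A.degree (2 * x - 1) fun i => (field 64 (A.right X) (b + A.stride * i) : ℝ)) ≤
      bernsteinForm A.degree x fun i => (field 64 X (b + A.stride * i) : ℝ) := by
  refine (bernsteinForm_mono ⟨by linarith, by linarith⟩ fun i hi => le_of_eq ?_).trans
    ((isSubaverageTriangle_iterate_average hX hbound).bernsteinForm_right_le h₀ h₁)
  have hlt : A.stride * i ≤ A.stride * A.degree := Nat.mul_le_mul_left _ hi
  rw [right, field_rightCoeffs hA le_rfl (by omega), coord_add_stride_mul hA hb hi,
    if_pos (by omega), Nat.add_sub_cancel]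

end AxisLayout

end Subdivision

section Tensor

/-- The layouts of the three axes of a packed array of Bernstein coefficients of a polynomial in
three variables of degree `d i` in the `i`-th variable; the first index varies fastest. -/
def tensorAxis (d : Fin 3 → ℕ) : Fin 3 → AxisLayout :=
  ![⟨1, d 0, (d 1 + 1) * (d 2 + 1)⟩, ⟨d 0 + 1, d 1, d 2 + 1⟩, ⟨(d 0 + 1) * (d 1 + 1), d 2, 1⟩]

/-- The position of the coefficient with index `(i, j, k)` in a packed array. -/
def tensorIndex (d : Fin 3 → ℕ) (i j k : ℕ) : ℕ := i + (d 0 + 1) * j + (d 0 + 1) * (d 1 + 1) * k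

/-- The polynomial in three variables with Bernstein coefficients the fields of `X`. -/
noncomputable def tensorForm (d : Fin 3 → ℕ) (X : ℕ) (a : Fin 3 → ℝ) : ℝ :=
  bernsteinForm (d 0) (a 0) fun i => bernsteinForm (d 1) (a 1) fun j =>
    bernsteinForm (d 2) (a 2) fun k => (field 64 X (tensorIndex d i j k) : ℝ)

/-- The number of coefficients of a polynomial of degree `d i` in the `i`-th variable. -/
def tensorSize (d : Fin 3 → ℕ) : ℕ := (d 0 + 1) * (d 1 + 1) * (d 2 + 1)

variable {d : Fin 3 → ℕ} {X Y : ℕ} {a : Fin 3 → ℝ}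

lemma tensorIndex_lt_tensorSize {i j k : ℕ} (hi : i ≤ d 0) (hj : j ≤ d 1) (hk : k ≤ d 2) :
    tensorIndex d i j k < tensorSize d := by
  have h₁ : (d 0 + 1) * (j + 1) ≤ (d 0 + 1) * (d 1 + 1) := by gcongr
  have h₂ : (d 0 + 1) * (d 1 + 1) * (k + 1) ≤ (d 0 + 1) * (d 1 + 1) * (d 2 + 1) := by gcongr
  unfold tensorIndex tensorSize
  linarith

lemma size_tensorAxis (d : Fin 3 → ℕ) (s : Fin 3) : (tensorAxis d s).size = tensorSize d := by
  fin_cases s <;> simp [tensorAxis, AxisLayout.size, tensorSize, mul_assoc]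

lemma degree_tensorAxis (d : Fin 3 → ℕ) (s : Fin 3) : (tensorAxis d s).degree = d s := by
  fin_cases s <;> rfl

lemma stride_tensorAxis_pos (d : Fin 3 → ℕ) (s : Fin 3) : 0 < (tensorAxis d s).stride := by
  fin_cases s <;> simp [tensorAxis]

lemma le_tensorForm {m : ℝ} (ha : ∀ s, a s ∈ Set.Icc (0 : ℝ) 1)
    (h : ∀ i < tensorSize d, m ≤ field 64 X i) : m ≤ tensorForm d X a := by
  calc m = bernsteinForm (d 0) (a 0) fun _ => bernsteinForm (d 1) (a 1) fun _ =>
        bernsteinForm (d 2) (a 2) fun _ => m := by simp only [bernsteinForm_const]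
    _ ≤ tensorForm d X a :=
        bernsteinForm_mono (ha 0) fun _ hi => bernsteinForm_mono (ha 1) fun _ hj =>
          bernsteinForm_mono (ha 2) fun _ hk => h _ (tensorIndex_lt_tensorSize hi hj hk)

lemma coord_tensorAxis_zero (d : Fin 3 → ℕ) (j k : ℕ) :
    (tensorAxis d 0).coord (tensorIndex d 0 j k) = 0 := by
  change (0 + (d 0 + 1) * j + (d 0 + 1) * (d 1 + 1) * k) / 1 % (d 0 + 1) = 0
  rw [Nat.div_one, zero_add, mul_assoc, ← mul_add, Nat.mul_mod_right]

lemma coord_tensorAxis_one {i : ℕ} (hi : i ≤ d 0) (k : ℕ) :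
    (tensorAxis d 1).coord (tensorIndex d i 0 k) = 0 := by
  change (i + (d 0 + 1) * 0 + (d 0 + 1) * (d 1 + 1) * k) / (d 0 + 1) % (d 1 + 1) = 0
  rw [mul_zero, add_zero, mul_assoc, Nat.add_mul_div_left _ _ (Nat.succ_pos _),
    Nat.div_eq_of_lt (Nat.lt_succ_of_le hi), zero_add, Nat.mul_mod_right]

lemma coord_tensorAxis_two {i j : ℕ} (hi : i ≤ d 0) (hj : j ≤ d 1) :
    (tensorAxis d 2).coord (tensorIndex d i j 0) = 0 := by
  have hlt : tensorIndex d i j 0 < (d 0 + 1) * (d 1 + 1) := by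
    have h : (d 0 + 1) * (j + 1) ≤ (d 0 + 1) * (d 1 + 1) := by gcongr
    unfold tensorIndex
    linarith
  change tensorIndex d i j 0 / ((d 0 + 1) * (d 1 + 1)) % (d 2 + 1) = 0
  rw [Nat.div_eq_of_lt hlt, Nat.zero_mod]

/-- Along every line of an axis, the polynomial with coefficients `Y` at `t` is at most the
polynomial with coefficients `X` at `x`. -/
def LineDominated (A : AxisLayout) (X Y : ℕ) (x t : ℝ) : Prop :=
  ∀ b, A.coord b = 0 → b + A.stride * A.degree < A.size →
    (bernsteinForm A.degree t fun i => (field 64 Y (b + A.stride * i) : ℝ)) ≤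
      bernsteinForm A.degree x fun i => (field 64 X (b + A.stride * i) : ℝ)

lemma tensorForm_update_le {t : ℝ} (ha : ∀ s, a s ∈ Set.Icc (0 : ℝ) 1) : ∀ {s : Fin 3},
    LineDominated (tensorAxis d s) X Y (a s) t →
      tensorForm d Y (Function.update a s t) ≤ tensorForm d X a
  | 0, h => by
    have hline {j k : ℕ} (hj : j ≤ d 1) (hk : k ≤ d 2) :
        (bernsteinForm (d 0) t fun i => (field 64 Y (tensorIndex d i j k) : ℝ)) ≤
          bernsteinForm (d 0) (a 0) fun i => (field 64 X (tensorIndex d i j k) : ℝ) := by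
      have hi (i : ℕ) :
          tensorIndex d 0 j k + (tensorAxis d 0).stride * i = tensorIndex d i j k := by
        change tensorIndex d 0 j k + 1 * i = _
        unfold tensorIndex; ring
      simpa only [hi, degree_tensorAxis] using h _ (coord_tensorAxis_zero d j k) <|
        size_tensorAxis d 0 ▸ (hi (d 0)).trans_lt (tensorIndex_lt_tensorSize le_rfl hj hk)
    simp only [tensorForm, Function.update, bernsteinForm_comm (d 0)]
    exact bernsteinForm_mono (ha 1) fun j hj => bernsteinForm_mono (ha 2) fun k hk => hline hj hk
  | 1, h => by
    have hline {i k : ℕ} (hi : i ≤ d 0) (hk : k ≤ d 2) :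
        (bernsteinForm (d 1) t fun j => (field 64 Y (tensorIndex d i j k) : ℝ)) ≤
          bernsteinForm (d 1) (a 1) fun j => (field 64 X (tensorIndex d i j k) : ℝ) := by
      have hj (j : ℕ) :
          tensorIndex d i 0 k + (tensorAxis d 1).stride * j = tensorIndex d i j k := by
        change tensorIndex d i 0 k + (d 0 + 1) * j = _
        unfold tensorIndex; ring
      simpa only [hj, degree_tensorAxis] using h _ (coord_tensorAxis_one hi k) <|
        size_tensorAxis d 1 ▸ (hj (d 1)).trans_lt (tensorIndex_lt_tensorSize hi le_rfl hk)
    simp only [tensorForm, Function.update, bernsteinForm_comm (d 1)]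
    exact bernsteinForm_mono (ha 0) fun i hi => bernsteinForm_mono (ha 2) fun k hk => hline hi hk
  | 2, h => by
    have hline {i j : ℕ} (hi : i ≤ d 0) (hj : j ≤ d 1) :
        (bernsteinForm (d 2) t fun k => (field 64 Y (tensorIndex d i j k) : ℝ)) ≤
          bernsteinForm (d 2) (a 2) fun k => (field 64 X (tensorIndex d i j k) : ℝ) := by
      have hk (k : ℕ) :
          tensorIndex d i j 0 + (tensorAxis d 2).stride * k = tensorIndex d i j k := by
        change tensorIndex d i j 0 + (d 0 + 1) * (d 1 + 1) * k = _
        unfold tensorIndex; ring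
      simpa only [hk, degree_tensorAxis] using h _ (coord_tensorAxis_two hi hj) <|
        size_tensorAxis d 2 ▸ (hk (d 2)).trans_lt (tensorIndex_lt_tensorSize hi hj le_rfl)
    simp only [tensorForm, Function.update]
    exact bernsteinForm_mono (ha 0) fun i hi => bernsteinForm_mono (ha 1) fun j hj => hline hi hj

lemma tensorForm_left_le (s : Fin 3) (hX : IsWordArray X) (ha : ∀ s, a s ∈ Set.Icc (0 : ℝ) 1)
    (h : a s ≤ 1 / 2) :
    tensorForm d ((tensorAxis d s).left X) (Function.update a s (2 * a s)) ≤ tensorForm d X a :=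
  tensorForm_update_le ha fun _ hb hbound =>
    AxisLayout.bernsteinForm_left_le (stride_tensorAxis_pos d s) hX hb hbound (ha s).1 h

lemma tensorForm_right_le (s : Fin 3) (hX : IsWordArray X) (ha : ∀ s, a s ∈ Set.Icc (0 : ℝ) 1)
    (h : 1 / 2 ≤ a s) :
    tensorForm d ((tensorAxis d s).right X) (Function.update a s (2 * a s - 1)) ≤
      tensorForm d X a :=
  tensorForm_update_le ha fun _ hb hbound =>
    AxisLayout.bernsteinForm_right_le (stride_tensorAxis_pos d s) hX hb hbound h (ha s).2

/-- Whether the first `n` fields of `X` are at least `m`: adding `2 ^ 63 - m` to all of them has to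
produce a carry into the top bit of each field. -/
def fieldsGE (n m X : ℕ) : Bool :=
  (X + (2 ^ 63 - m) * repunit 64 n) &&& (2 ^ 63 * repunit 64 n) == 2 ^ 63 * repunit 64 n

lemma le_field_of_fieldsGE {n m i : ℕ} (hX : IsWordArray X) (h : fieldsGE n m X) (hi : i < n) :
    m ≤ field 64 X i := by
  have hbias (j : ℕ) : field 64 ((2 ^ 63 - m) * repunit 64 n) j = if j < n then 2 ^ 63 - m else 0 :=
    field_mul_repunit_one (by norm_num) (by omega) n j
  have hcarry : field 64 X i + (2 ^ 63 - m) &&& 2 ^ 63 = 2 ^ 63 := by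
    have h := congrArg (field 64 · i) (beq_iff_eq.1 h)
    rw [field_land, field_mul_repunit_one (by norm_num) (by norm_num), if_pos hi, field_add, hbias,
      if_pos hi] at h
    · exact h
    · intro j
      have := hX j
      rw [hbias]
      split_ifs <;> omega
  have hge : 2 ^ 63 ≤ field 64 X i + (2 ^ 63 - m) := hcarry.symm.le.trans Nat.and_le_left
  have := hX i
  omega

end Tensor

section BranchAndBound

/-- The interval `[num / 2 ^ exp, (num + 1) / 2 ^ exp]`. -/
structure DyadicInterval where
  num : ℕ
  exp : ℕ

namespace DyadicInterval

/-- The affine coordinate of `x` on the interval, `0` and `1` at the endpoints. -/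
noncomputable def localCoord (I : DyadicInterval) (x : ℝ) : ℝ := 2 ^ I.exp * x - I.num

/-- Membership in the interval. The right endpoint is excluded unless it is `1`, so that the
intervals of a subdivision of `[0, 1]` are disjoint. -/
def Contains (I : DyadicInterval) (x : ℝ) : Prop :=
  I.localCoord x ∈ Set.Icc 0 1 ∧ (I.localCoord x < 1 ∨ x = 1)

/-- The lower half of the interval. -/
def lowerHalf (I : DyadicInterval) : DyadicInterval := ⟨2 * I.num, I.exp + 1⟩

/-- The upper half of the interval. -/
def upperHalf (I : DyadicInterval) : DyadicInterval := ⟨2 * I.num + 1, I.exp + 1⟩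

/-- Whether no point of `I` is at most a point of `J`. -/
def above (I J : DyadicInterval) : Bool :=
  (J.num + 1) * 2 ^ I.exp ≤ I.num * 2 ^ J.exp && J.num + 1 < 2 ^ J.exp

variable {I J : DyadicInterval} {x y : ℝ}

lemma localCoord_lowerHalf (I : DyadicInterval) (x : ℝ) :
    I.lowerHalf.localCoord x = 2 * I.localCoord x := by
  simp only [localCoord, lowerHalf]; push_cast; ring

lemma localCoord_upperHalf (I : DyadicInterval) (x : ℝ) :
    I.upperHalf.localCoord x = 2 * I.localCoord x - 1 := by
  simp only [localCoord, upperHalf]; push_cast; ring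

lemma Contains.lowerHalf (hx : I.Contains x) (h : I.localCoord x < 1 / 2) :
    I.lowerHalf.Contains x := by
  have h₀ := hx.1.1
  rw [Contains, localCoord_lowerHalf]
  exact ⟨⟨by linarith, by linarith⟩, .inl (by linarith)⟩

lemma Contains.upperHalf (hx : I.Contains x) (h : 1 / 2 ≤ I.localCoord x) :
    I.upperHalf.Contains x := by
  have h₁ := hx.1.2
  rw [Contains, localCoord_upperHalf]
  exact ⟨⟨by linarith, by linarith⟩, hx.2.imp_left fun h => by linarith⟩

lemma lt_of_above (h : I.above J) (hx : I.Contains x) (hy : J.Contains y) : y < x := by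
  obtain ⟨hle, hlt⟩ : (J.num + 1) * 2 ^ I.exp ≤ I.num * 2 ^ J.exp ∧ J.num + 1 < 2 ^ J.exp := by
    simpa [above] using h
  have hle : ((J.num : ℝ) + 1) * 2 ^ I.exp ≤ I.num * 2 ^ J.exp := mod_cast hle
  have hlt : (J.num : ℝ) + 1 < 2 ^ J.exp := mod_cast hlt
  have hxI : (I.num : ℝ) ≤ 2 ^ I.exp * x := by linarith [hx.1.1, localCoord.eq_1 I x]
  have hyJ : 2 ^ J.exp * y < J.num + 1 := by
    rcases hy.2 with hy' | rfl
    · linarith [localCoord.eq_1 J y]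
    · linarith [hy.1.2, localCoord.eq_1 J 1]
  have : 2 ^ I.exp * 2 ^ J.exp * y < 2 ^ I.exp * 2 ^ J.exp * x := by
    calc 2 ^ I.exp * 2 ^ J.exp * y = 2 ^ I.exp * (2 ^ J.exp * y) := by ring
      _ < 2 ^ I.exp * (J.num + 1) := by gcongr
      _ ≤ 2 ^ J.exp * I.num := by linarith
      _ ≤ 2 ^ J.exp * (2 ^ I.exp * x) := by gcongr
      _ = 2 ^ I.exp * 2 ^ J.exp * x := by ring
  exact lt_of_mul_lt_mul_left this (by positivity)

end DyadicInterval

/-- The assertion that on `0 ≤ a 0 ≤ a 1 ≤ a 2 ≤ 1` a polynomial of degree `degree` is at least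
`bound` wherever a second polynomial of degree `constraintDegree` is at most `constraintBound`. -/
structure BoundProblem where
  degree : Fin 3 → ℕ
  bound : ℕ
  constraintDegree : Fin 3 → ℕ
  constraintBound : ℕ

/-- A box in the unit cube, with lower bounds for the Bernstein coefficients on it of the two
polynomials of a `BoundProblem`. -/
structure Cell where
  coeffs : ℕ
  constraintCoeffs : ℕ
  box : Fin 3 → DyadicInterval

/-- Both arrays of the cell consist of words of 63 bits. -/
def Cell.IsPacked (C : Cell) : Prop := IsWordArray C.coeffs ∧ IsWordArray C.constraintCoeffs

/-- The coordinates of `a` relative to the box of the cell. -/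
noncomputable def Cell.localCoord (C : Cell) (a : Fin 3 → ℝ) : Fin 3 → ℝ :=
  fun s => (C.box s).localCoord (a s)

/-- Membership in the box of the cell. -/
def Cell.Contains (C : Cell) (a : Fin 3 → ℝ) : Prop := ∀ s, (C.box s).Contains (a s)

/-- The unit cube. -/
def Cell.root (X Y : ℕ) : Cell := ⟨X, Y, fun _ => ⟨0, 0⟩⟩

namespace BoundProblem

variable (P : BoundProblem)

/-- The assertion of `P` on the box of the cell. -/
def HoldsOn (C : Cell) : Prop :=
  ∀ a : Fin 3 → ℝ, C.Contains a → a 0 ≤ a 1 → a 1 ≤ a 2 →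
    tensorForm P.constraintDegree C.constraintCoeffs (C.localCoord a) ≤ P.constraintBound →
    P.bound ≤ tensorForm P.degree C.coeffs (C.localCoord a)

/-- The part of the cell in the lower half of the `s`-th side. -/
def lower (s : Fin 3) (C : Cell) : Cell where
  coeffs := (tensorAxis P.degree s).left C.coeffs
  constraintCoeffs := (tensorAxis P.constraintDegree s).left C.constraintCoeffs
  box := Function.update C.box s (C.box s).lowerHalf

/-- The part of the cell in the upper half of the `s`-th side. -/
def upper (s : Fin 3) (C : Cell) : Cell where
  coeffs := (tensorAxis P.degree s).right C.coeffs
  constraintCoeffs := (tensorAxis P.constraintDegree s).right C.constraintCoeffs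
  box := Function.update C.box s (C.box s).upperHalf

/-- A test for `P` on a cell: the box avoids `a 0 ≤ a 1 ≤ a 2`, or the coefficients of the
constraint are too large, or the coefficients of the polynomial are at least `P.bound`. -/
def leafTest (C : Cell) : Bool :=
  (C.box 0).above (C.box 1) || (C.box 1).above (C.box 2) ||
    fieldsGE (tensorSize P.constraintDegree) (P.constraintBound + 1) C.constraintCoeffs ||
    fieldsGE (tensorSize P.degree) P.bound C.coeffs

variable {P} {C : Cell} {s : Fin 3} {a : Fin 3 → ℝ}

lemma isPacked_lower (hC : C.IsPacked) : (P.lower s C).IsPacked :=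
  ⟨AxisLayout.isWordArray_leftCoeffs _ hC.1, AxisLayout.isWordArray_leftCoeffs _ hC.2⟩

lemma isPacked_upper (hC : C.IsPacked) : (P.upper s C).IsPacked :=
  ⟨AxisLayout.isWordArray_rightCoeffs _ hC.1, AxisLayout.isWordArray_rightCoeffs _ hC.2⟩

lemma holdsOn_of_leafTest (hC : C.IsPacked) (h : P.leafTest C) : P.HoldsOn C := by
  intro a ha h₀₁ h₁₂ hconstraint
  simp only [leafTest, Bool.or_eq_true] at h
  rcases h with ((h | h) | h) | h
  · exact absurd h₀₁ (DyadicInterval.lt_of_above h (ha 0) (ha 1)).not_ge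
  · exact absurd h₁₂ (DyadicInterval.lt_of_above h (ha 1) (ha 2)).not_ge
  · have hge := (le_tensorForm (fun s => (ha s).1) fun i hi =>
      Nat.cast_le.2 (le_field_of_fieldsGE hC.2 h hi)).trans hconstraint
    exact absurd (Nat.cast_le.1 hge) (Nat.lt_succ_self _).not_ge
  · exact le_tensorForm (fun s => (ha s).1) fun i hi =>
      Nat.cast_le.2 (le_field_of_fieldsGE hC.1 h hi)

lemma localCoord_lower (P : BoundProblem) (s : Fin 3) (C : Cell) (a : Fin 3 → ℝ) :
    (P.lower s C).localCoord a = Function.update (C.localCoord a) s (2 * C.localCoord a s) := by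
  refine funext fun i => (Function.apply_update
    (fun i (J : DyadicInterval) => J.localCoord (a i)) C.box s _ i).trans ?_
  rw [DyadicInterval.localCoord_lowerHalf]
  rfl

lemma localCoord_upper (P : BoundProblem) (s : Fin 3) (C : Cell) (a : Fin 3 → ℝ) :
    (P.upper s C).localCoord a = Function.update (C.localCoord a) s (2 * C.localCoord a s - 1) := by
  refine funext fun i => (Function.apply_update
    (fun i (J : DyadicInterval) => J.localCoord (a i)) C.box s _ i).trans ?_
  rw [DyadicInterval.localCoord_upperHalf]
  rfl

lemma contains_lower (ha : C.Contains a) (h : C.localCoord a s < 1 / 2) :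
    (P.lower s C).Contains a :=
  (Function.forall_update_iff C.box fun i J => J.Contains (a i)).2
    ⟨(ha s).lowerHalf h, fun i _ => ha i⟩

lemma contains_upper (ha : C.Contains a) (h : 1 / 2 ≤ C.localCoord a s) :
    (P.upper s C).Contains a :=
  (Function.forall_update_iff C.box fun i J => J.Contains (a i)).2
    ⟨(ha s).upperHalf h, fun i _ => ha i⟩

lemma holdsOn_of_lower_of_upper (s : Fin 3) (hC : C.IsPacked) (hl : P.HoldsOn (P.lower s C))
    (hu : P.HoldsOn (P.upper s C)) : P.HoldsOn C := by
  intro a ha h₀₁ h₁₂ hconstraint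
  have hunit (i : Fin 3) : C.localCoord a i ∈ Set.Icc 0 1 := (ha i).1
  rcases lt_or_ge (C.localCoord a s) (1 / 2) with hs | hs
  · have hl := hl a (contains_lower ha hs) h₀₁ h₁₂
    rw [localCoord_lower] at hl
    exact (hl ((tensorForm_left_le s hC.2 hunit hs.le).trans hconstraint)).trans
      (tensorForm_left_le s hC.1 hunit hs.le)
  · have hu := hu a (contains_upper ha hs) h₀₁ h₁₂
    rw [localCoord_upper] at hu
    exact (hu ((tensorForm_right_le s hC.2 hunit hs).trans hconstraint)).trans
      (tensorForm_right_le s hC.1 hunit hs)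

lemma HoldsOn.le_tensorForm {X Y : ℕ} (h : P.HoldsOn (.root X Y))
    (ha : ∀ s, a s ∈ Set.Icc (0 : ℝ) 1) (h₀₁ : a 0 ≤ a 1) (h₁₂ : a 1 ≤ a 2)
    (hconstraint : tensorForm P.constraintDegree Y a ≤ P.constraintBound) :
    P.bound ≤ tensorForm P.degree X a := by
  have hcoord : (Cell.root X Y).localCoord a = a := by
    funext s
    simp [Cell.root, Cell.localCoord, DyadicInterval.localCoord]
  have hcontains : (Cell.root X Y).Contains a := fun s => by
    have hs : ((Cell.root X Y).box s).localCoord (a s) = a s := congrFun hcoord s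
    rw [DyadicInterval.Contains, hs]
    exact ⟨ha s, (ha s).2.lt_or_eq⟩
  have hle := h a hcontains h₀₁ h₁₂ (hcoord.symm ▸ hconstraint)
  rwa [hcoord] at hle

end BoundProblem

/-- A recipe for bisecting a box along its axes. -/
inductive SplitTree where
  | leaf
  | split (s : Fin 3) (lower upper : SplitTree)

namespace SplitTree

/-- Decode a tree of height less than `fuel` written in preorder in base `4`, least significant
digit first, with digit `0` for a leaf and `s + 1` for a split of axis `s`; also return the
remaining digits. -/
def decodeAux : ℕ → ℕ → SplitTree × ℕ
  | 0, code => (leaf, code)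
  | fuel + 1, code =>
    let node (s : Fin 3) :=
      let lower := decodeAux fuel (code >>> 2)
      let upper := decodeAux fuel lower.2
      (split s lower.1 upper.1, upper.2)
    match code &&& 3 with
    | 0 => (leaf, code >>> 2)
    | 1 => node 0
    | 2 => node 1
    | _ => node 2

/-- The tree encoded by `code`. -/
def decode (fuel code : ℕ) : SplitTree := (decodeAux fuel code).1

/-- Whether all leaves of the subdivision pass the test. -/
def check (P : BoundProblem) : SplitTree → Cell → Bool
  | leaf, C => P.leafTest C
  | split s l u, C => check P l (P.lower s C) && check P u (P.upper s C)

/-- The number of splits of the tree. -/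
def numSplits : SplitTree → ℕ
  | leaf => 0
  | split _ l u => numSplits l + numSplits u + 1

/-- The maximal subtrees with at most `n` splits, together with their cells. -/
def frontier (P : BoundProblem) (n : ℕ) : SplitTree → Cell → List (SplitTree × Cell)
  | leaf, C => [(leaf, C)]
  | split s l u, C =>
    bif (split s l u).numSplits ≤ n then [(split s l u, C)]
    else frontier P n l (P.lower s C) ++ frontier P n u (P.upper s C)

variable {P : BoundProblem}

lemma holdsOn_of_check {T : SplitTree} {C : Cell} (hC : C.IsPacked) (h : T.check P C) :
    P.HoldsOn C := by
  induction T generalizing C with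
  | leaf => exact BoundProblem.holdsOn_of_leafTest hC h
  | split s l u ihl ihu =>
    obtain ⟨hl, hu⟩ := Bool.and_eq_true_iff.1 h
    exact BoundProblem.holdsOn_of_lower_of_upper s hC (ihl (BoundProblem.isPacked_lower hC) hl)
      (ihu (BoundProblem.isPacked_upper hC) hu)

lemma holdsOn_of_forall_frontier {n : ℕ} {T : SplitTree} {C : Cell} (hC : C.IsPacked)
    (h : ∀ p ∈ frontier P n T C, p.1.check P p.2) : P.HoldsOn C := by
  induction T generalizing C with
  | leaf => exact holdsOn_of_check hC (h (leaf, C) (List.mem_singleton_self _))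
  | split s l u ihl ihu =>
    rw [frontier] at h
    cases hn : decide ((split s l u).numSplits ≤ n) <;> simp only [hn, cond_true, cond_false] at h
    · exact BoundProblem.holdsOn_of_lower_of_upper s hC
        (ihl (BoundProblem.isPacked_lower hC) fun p hp => h p (List.mem_append_left _ hp))
        (ihu (BoundProblem.isPacked_upper hC) fun p hp => h p (List.mem_append_right _ hp))
    · exact holdsOn_of_check hC (h _ (List.mem_singleton_self _))

end SplitTree
end BranchAndBound

section CoefficientBound

variable {σ : Type*} {P Q : MvPolynomial σ ℤ} {m n : ℕ}

/-- `m` bounds the sum of the absolute values of the coefficients of `P`, as witnessed by a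
polynomial that dominates `P` coefficientwise and takes the value `m` at `(1, …, 1)`. -/
def HasL1Bound (P : MvPolynomial σ ℤ) (m : ℕ) : Prop :=
  ∃ D : MvPolynomial σ ℤ, (∀ α, |P.coeff α| ≤ D.coeff α) ∧ eval 1 D = m

lemma hasL1Bound_C (z : ℤ) : HasL1Bound (C z : MvPolynomial σ ℤ) z.natAbs := by
  classical
  refine ⟨C |z|, fun α => ?_, by simp⟩
  rw [coeff_C, coeff_C]
  split_ifs <;> simp

lemma hasL1Bound_X (i : σ) : HasL1Bound (X i : MvPolynomial σ ℤ) 1 := by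
  classical
  refine ⟨X i, fun α => ?_, by simp⟩
  rw [coeff_X]
  split_ifs <;> simp

lemma HasL1Bound.add (hP : HasL1Bound P m) (hQ : HasL1Bound Q n) : HasL1Bound (P + Q) (m + n) := by
  obtain ⟨D, hD, hDm⟩ := hP
  obtain ⟨E, hE, hEn⟩ := hQ
  refine ⟨D + E, fun α => ?_, by simp [hDm, hEn]⟩
  rw [coeff_add, coeff_add]
  exact (abs_add_le _ _).trans (add_le_add (hD α) (hE α))

lemma HasL1Bound.mul (hP : HasL1Bound P m) (hQ : HasL1Bound Q n) : HasL1Bound (P * Q) (m * n) := by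
  classical
  obtain ⟨D, hD, hDm⟩ := hP
  obtain ⟨E, hE, hEn⟩ := hQ
  refine ⟨D * E, fun α => ?_, by simp [hDm, hEn]⟩
  rw [coeff_mul, coeff_mul]
  refine (abs_sum_le_sum_abs _ _).trans (sum_le_sum fun β _ => ?_)
  rw [abs_mul]
  exact mul_le_mul (hD _) (hE _) (abs_nonneg _) ((abs_nonneg _).trans (hD _))

lemma HasL1Bound.pow (hP : HasL1Bound P m) : ∀ k : ℕ, HasL1Bound (P ^ k) (m ^ k)
  | 0 => by simpa using hasL1Bound_C (σ := σ) 1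
  | k + 1 => by simpa only [pow_succ] using (hP.pow k).mul hP

lemma HasL1Bound.abs_coeff_le (hP : HasL1Bound P m) (α : σ →₀ ℕ) : |P.coeff α| ≤ m := by
  obtain ⟨D, hD, hDm⟩ := hP
  have coeff_nonneg (β) : 0 ≤ D.coeff β := (abs_nonneg _).trans (hD β)
  refine (hD α).trans ?_
  rw [← hDm, eval_eq]
  simp only [Pi.one_apply, one_pow, prod_const_one, mul_one]
  by_cases hα : α ∈ D.support
  · exact single_le_sum (f := D.coeff) (fun β _ => coeff_nonneg β) hα
  · rw [notMem_support_iff.1 hα]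
    exact sum_nonneg fun β _ => coeff_nonneg β

end CoefficientBound

section PolyExpr

/-- Polynomial expressions with integer coefficients in the variables `x 0, x 1, x 2` and the
complementary variables `1 - x 0, 1 - x 1, 1 - x 2`. -/
inductive PolyExpr where
  | const (z : ℤ)
  | var (i : Fin 3)
  | covar (i : Fin 3)
  | add (e f : PolyExpr)
  | mul (e f : PolyExpr)

namespace PolyExpr

instance : IntCast PolyExpr := ⟨const⟩
instance : Add PolyExpr := ⟨add⟩
instance : Mul PolyExpr := ⟨mul⟩
instance : Sub PolyExpr := ⟨fun e f => add e (mul (const (-1)) f)⟩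

/-- The value of an expression at a point. -/
def eval (a : Fin 3 → ℝ) : PolyExpr → ℝ
  | const z => z
  | var i => a i
  | covar i => 1 - a i
  | add e f => eval a e + eval a f
  | mul e f => eval a e * eval a f

/-- A bound for the degree of an expression in each variable. -/
def degree : PolyExpr → Fin 3 → ℕ
  | const _ => 0
  | var i => Pi.single i 1
  | covar i => Pi.single i 1
  | add e f => fun s => max (degree e s) (degree f s)
  | mul e f => fun s => degree e s + degree f s

/-- The product `∏ i, (1 + z i) ^ n i`. -/
def padding {R : Type*} [CommSemiring R] (z : Fin 3 → R) (n : Fin 3 → ℕ) : R :=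
  (1 + z 0) ^ n 0 * (1 + z 1) ^ n 1 * (1 + z 2) ^ n 2

/-- The polynomial `∏ i, (1 + z i) ^ d i * e (z / (1 + z))`, with `d` the degree of `e`. Its
coefficients are the Bernstein coefficients of `e` multiplied by binomial coefficients. -/
def numerator {R : Type*} [CommRing R] (z : Fin 3 → R) : PolyExpr → R
  | const c => c
  | var i => z i
  | covar _ => 1
  | add e f => numerator z e * padding z (fun s => degree f s - degree e s) +
      numerator z f * padding z (fun s => degree e s - degree f s)
  | mul e f => numerator z e * numerator z f

/-- A bound for the sum of the absolute values of the coefficients of the numerator. -/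
def l1Bound : PolyExpr → ℕ
  | const c => c.natAbs
  | var _ => 1
  | covar _ => 1
  | add e f => l1Bound e * padding 1 (fun s => degree f s - degree e s) +
      l1Bound f * padding 1 (fun s => degree e s - degree f s)
  | mul e f => l1Bound e * l1Bound f

lemma padding_eq_prod {R : Type*} [CommSemiring R] (z : Fin 3 → R) (n : Fin 3 → ℕ) :
    padding z n = ∏ i, (1 + z i) ^ n i := by
  rw [Fin.prod_univ_three, padding]

section RingHom

variable {R S : Type*} [CommRing R] [CommRing S] (φ : R →+* S) (z : Fin 3 → R)

lemma map_padding (n : Fin 3 → ℕ) : φ (padding z n) = padding (φ ∘ z) n := by simp [padding]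

lemma map_numerator : ∀ e : PolyExpr, φ (numerator z e) = numerator (φ ∘ z) e
  | const c => map_intCast φ c
  | var _ => rfl
  | covar _ => map_one φ
  | add e f => by simp only [numerator, map_add, map_mul, map_padding, map_numerator]
  | mul e f => by simp only [numerator, map_mul, map_numerator]

end RingHom

lemma degreeOf_padding_X_le (s : Fin 3) (n : Fin 3 → ℕ) :
    (padding (X : Fin 3 → MvPolynomial (Fin 3) ℤ) n).degreeOf s ≤ n s := by
  classical
  have hfactor (i : Fin 3) :
      ((1 + X i : MvPolynomial (Fin 3) ℤ) ^ n i).degreeOf s ≤ if s = i then n s else 0 := by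
    refine (degreeOf_pow_le _ _ _).trans ?_
    have := degreeOf_add_le s (1 : MvPolynomial (Fin 3) ℤ) (X i)
    rw [degreeOf_one, degreeOf_X, zero_max] at this
    split_ifs at this ⊢ with h
    · subst h
      exact (Nat.mul_le_mul_left _ this).trans (mul_one _).le
    · exact (Nat.mul_le_mul_left _ this).trans (mul_zero _).le
  rw [padding_eq_prod]
  refine (degreeOf_prod_le s _ _).trans ((sum_le_sum fun i _ => hfactor i).trans ?_)
  rw [sum_ite_eq, if_pos (mem_univ s)]

lemma degreeOf_numerator_X_le (s : Fin 3) :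
    ∀ e : PolyExpr, (numerator (X : Fin 3 → MvPolynomial (Fin 3) ℤ) e).degreeOf s ≤ degree e s
  | const c => (degreeOf_C c s).le
  | var i => by
    rw [numerator, degreeOf_X, degree, Pi.single_apply]
  | covar i => by simp [numerator]
  | add e f => by
    have he := degreeOf_numerator_X_le s e
    have hf := degreeOf_numerator_X_le s f
    have hpe := degreeOf_padding_X_le s fun s => degree f s - degree e s
    have hpf := degreeOf_padding_X_le s fun s => degree e s - degree f s
    refine (degreeOf_add_le _ _ _).trans (max_le ?_ ?_) <;>
      refine (degreeOf_mul_le _ _ _).trans ?_ <;> simp only [degree] <;> omega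
  | mul e f =>
    (degreeOf_mul_le s _ _).trans
      (add_le_add (degreeOf_numerator_X_le s e) (degreeOf_numerator_X_le s f))

lemma hasL1Bound_padding_X (n : Fin 3 → ℕ) :
    HasL1Bound (padding (X : Fin 3 → MvPolynomial (Fin 3) ℤ) n) (padding 1 n) := by
  have hfactor (i : Fin 3) := ((hasL1Bound_C 1).add (hasL1Bound_X i)).pow (n i)
  exact ((hfactor 0).mul (hfactor 1)).mul (hfactor 2)

lemma hasL1Bound_numerator_X : ∀ e : PolyExpr,
    HasL1Bound (numerator (X : Fin 3 → MvPolynomial (Fin 3) ℤ) e) (l1Bound e)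
  | const c => hasL1Bound_C c
  | var i => hasL1Bound_X i
  | covar _ => hasL1Bound_C 1
  | add e f =>
    ((hasL1Bound_numerator_X e).mul (hasL1Bound_padding_X _)).add
      ((hasL1Bound_numerator_X f).mul (hasL1Bound_padding_X _))
  | mul e f => (hasL1Bound_numerator_X e).mul (hasL1Bound_numerator_X f)

lemma padding_mul_padding {R : Type*} [CommSemiring R] (z : Fin 3 → R) (m n : Fin 3 → ℕ) :
    padding z m * padding z n = padding z (fun s => m s + n s) := by
  simp only [padding_eq_prod, pow_add, prod_mul_distrib]

lemma numerator_eq_padding_mul_eval {z : Fin 3 → ℝ} (hz : ∀ i, 1 + z i ≠ 0) : ∀ e : PolyExpr,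
    numerator z e = padding z (degree e) * eval (fun i => z i / (1 + z i)) e
  | const c => by simp [numerator, padding, degree, eval]
  | var i => by
    have : padding z (Pi.single i 1) = 1 + z i := by fin_cases i <;> simp [padding]
    rw [numerator, degree, eval, this, mul_div_cancel₀ _ (hz i)]
  | covar i => by
    have : padding z (Pi.single i 1) = 1 + z i := by fin_cases i <;> simp [padding]
    rw [numerator, degree, eval, this]
    field_simp [hz i]
    ring
  | add e f => by
    have hpad (m n : Fin 3 → ℕ) :
        padding z (fun s => max (m s) (n s)) = padding z m * padding z fun s => n s - m s := by
      rw [padding_mul_padding]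
      congr 1 with s
      omega
    have hcomm : (fun s => max (degree e s) (degree f s)) =
        fun s => max (degree f s) (degree e s) := funext fun _ => max_comm _ _
    rw [numerator, degree, eval, mul_add, hpad, numerator_eq_padding_mul_eval hz e,
      mul_right_comm, ← hpad, hcomm, hpad, numerator_eq_padding_mul_eval hz f]
    ring
  | mul e f => by
    rw [numerator, degree, eval, ← padding_mul_padding, numerator_eq_padding_mul_eval hz e,
      numerator_eq_padding_mul_eval hz f]
    ring

lemma continuous_eval : ∀ e : PolyExpr, Continuous fun a => eval a e
  | const _ => continuous_const
  | var i => continuous_apply i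
  | covar i => continuous_const.sub (continuous_apply i)
  | add e f => (continuous_eval e).add (continuous_eval f)
  | mul e f => (continuous_eval e).mul (continuous_eval f)

/-- The coefficient of the monomial with exponents `(i, j, k)` in the numerator of `e`. -/
noncomputable def coeff (e : PolyExpr) (i j k : ℕ) : ℤ :=
  MvPolynomial.coeff (Finsupp.equivFunOnFinite.symm ![i, j, k]) (numerator X e)

lemma abs_coeff_le (e : PolyExpr) (i j k : ℕ) : |coeff e i j k| ≤ l1Bound e :=
  (hasL1Bound_numerator_X e).abs_coeff_le _

lemma numerator_eq_sum {R : Type*} [CommRing R] (z : Fin 3 → R) (e : PolyExpr) :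
    numerator z e = ∑ i ∈ range (degree e 0 + 1), ∑ j ∈ range (degree e 1 + 1),
      ∑ k ∈ range (degree e 2 + 1), (coeff e i j k : R) * (z 0 ^ i * z 1 ^ j * z 2 ^ k) := by
  set P : MvPolynomial (Fin 3) ℤ := numerator X e with hP
  have hnum : numerator z e = ∑ m ∈ P.support, ((P.coeff m : ℤ) : R) * ∏ i, z i ^ m i := by
    have hz : z = eval₂Hom (Int.castRingHom R) z ∘ X := by funext i; simp
    conv_lhs => rw [hz]
    rw [← map_numerator, coe_eval₂Hom, eval₂_eq', ← hP]
    rfl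
  rw [hnum, ← sum_product', ← sum_product']
  have hexp (m : Fin 3 →₀ ℕ) : Finsupp.equivFunOnFinite.symm ![m 0, m 1, m 2] = m := by
    ext i
    fin_cases i <;> rfl
  refine sum_of_injOn (fun m => ((m 0, m 1), m 2)) (fun m _ n _ hmn => ?_) (fun m hm => ?_)
    (fun p _ hp => ?_) fun m _ => ?_
  · simp only [Prod.mk.injEq] at hmn
    rw [← hexp m, ← hexp n, hmn.1.1, hmn.1.2, hmn.2]
  · have hle (s : Fin 3) : m s < degree e s + 1 :=
      Nat.lt_succ_of_le ((monomial_le_degreeOf s hm).trans (degreeOf_numerator_X_le s e))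
    simp [hle]
  · have : coeff e p.1.1 p.1.2 p.2 = 0 := by
      by_contra h
      exact hp ⟨_, mem_support_iff.2 h, rfl⟩
    rw [this, Int.cast_zero, zero_mul]
  · rw [coeff, hexp, Fin.prod_univ_three]

lemma eval_eq_sum_of_ne_one {a : Fin 3 → ℝ} (ha : ∀ i, a i ≠ 1) (e : PolyExpr) :
    eval a e = ∑ i ∈ range (degree e 0 + 1), ∑ j ∈ range (degree e 1 + 1),
      ∑ k ∈ range (degree e 2 + 1), coeff e i j k * ((a 0 ^ i * (1 - a 0) ^ (degree e 0 - i)) *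
        (a 1 ^ j * (1 - a 1) ^ (degree e 1 - j)) * (a 2 ^ k * (1 - a 2) ^ (degree e 2 - k))) := by
  have hne (i : Fin 3) : 1 - a i ≠ 0 := sub_ne_zero.2 (ha i).symm
  set z : Fin 3 → ℝ := fun i => a i / (1 - a i) with hz
  have hadd (i : Fin 3) : 1 + z i = (1 - a i)⁻¹ := by
    rw [hz, inv_eq_one_div, eq_div_iff (hne i), add_mul, div_mul_cancel₀ _ (hne i)]
    ring
  have hdiv : (fun i => z i / (1 + z i)) = a := by
    funext i
    rw [hadd, div_inv_eq_mul, div_mul_cancel₀ _ (hne i)]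
  have hnum := numerator_eq_padding_mul_eval (z := z)
    (fun i => hadd i ▸ inv_ne_zero (hne i)) e
  have hpad : padding z (degree e) * ∏ i, (1 - a i) ^ degree e i = 1 := by
    rw [padding_eq_prod, ← prod_mul_distrib]
    exact prod_eq_one fun i _ => by rw [hadd, ← mul_pow, inv_mul_cancel₀ (hne i), one_pow]
  have hpow (s : Fin 3) {i : ℕ} (hi : i ∈ range (degree e s + 1)) :
      z s ^ i * (1 - a s) ^ degree e s = a s ^ i * (1 - a s) ^ (degree e s - i) := by
    rw [hz, div_pow, ← pow_sub_mul_pow _ (Nat.lt_succ_iff.1 (mem_range.1 hi))]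
    field_simp [hne s]
  rw [hdiv] at hnum
  calc eval a e = numerator z e * ∏ i, (1 - a i) ^ degree e i := by
        rw [hnum, mul_right_comm, hpad, one_mul]
    _ = _ := by
        simp only [numerator_eq_sum, sum_mul]
        refine sum_congr rfl fun i hi => sum_congr rfl fun j hj => sum_congr rfl fun k hk => ?_
        rw [← hpow 0 hi, ← hpow 1 hj, ← hpow 2 hk, Fin.prod_univ_three]
        ring

lemma eval_eq_sum (a : Fin 3 → ℝ) (e : PolyExpr) :
    eval a e = ∑ i ∈ range (degree e 0 + 1), ∑ j ∈ range (degree e 1 + 1),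
      ∑ k ∈ range (degree e 2 + 1), coeff e i j k * ((a 0 ^ i * (1 - a 0) ^ (degree e 0 - i)) *
        (a 1 ^ j * (1 - a 1) ^ (degree e 1 - j)) * (a 2 ^ k * (1 - a 2) ^ (degree e 2 - k))) := by
  have hdense : Dense (Set.univ.pi fun _ : Fin 3 => ({1}ᶜ : Set ℝ)) :=
    dense_pi _ fun _ _ => dense_compl_singleton 1
  revert a
  rw [← funext_iff]
  exact Continuous.ext_on hdense (continuous_eval e) (by fun_prop) fun a ha =>
    eval_eq_sum_of_ne_one (fun i => ha i (Set.mem_univ i)) e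

end PolyExpr
end PolyExpr

section PackedFieldMaps

lemma field_field {w n i : ℕ} (hi : i < n) (X j : ℕ) :
    field w (field (w * n) X j) i = field w X (i + n * j) := by
  refine Nat.eq_of_testBit_eq fun b => ?_
  have hbit : b < w → w * i + b < w * n := fun hb => by
    have := Nat.mul_le_mul_left w (Nat.succ_le_of_lt hi)
    rw [Nat.mul_succ] at this
    omega
  by_cases hb : b < w
  · simp only [testBit_field, hb, hbit hb, decide_true, Bool.true_and]
    congr 1
    ring
  · simp [testBit_field, hb]

lemma sum_mul_pow_lt {w : ℕ} {a : ℕ → ℕ} (ha : ∀ i, a i < 2 ^ w) (n : ℕ) :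
    ∑ i ∈ range n, a i * 2 ^ (w * i) < 2 ^ (w * n) := by
  induction n with
  | zero => simp
  | succ n ih =>
    have := Nat.mul_le_mul_right (2 ^ (w * n)) (Nat.succ_le_of_lt (ha n))
    rw [Nat.succ_mul, ← pow_add] at this
    rw [sum_range_succ, Nat.mul_succ, Nat.add_comm (w * n)]
    omega

lemma field_sum {w n i : ℕ} {a : ℕ → ℕ} (ha : ∀ i, a i < 2 ^ w) (hi : i < n) :
    field w (∑ i ∈ range n, a i * 2 ^ (w * i)) i = a i := by
  induction n with
  | zero => omega
  | succ n ih =>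
    rw [sum_range_succ, ← Nat.shiftLeft_eq, field_add_shiftLeft (sum_mul_pow_lt ha n)]
    split_ifs with h
    · exact ih h
    · obtain rfl : i = n := by omega
      rw [Nat.sub_self, field, Nat.mul_zero, pow_zero, Nat.div_one, Nat.mod_eq_of_lt (ha i)]

/-- The array of `v`-bit fields whose `i`-th field is `f b c`, where `b` is the `i`-th entry of the
list and `c` the `i`-th field of width `w` of the argument. -/
def mapFields (w v : ℕ) (f : ℕ → ℕ → ℕ) : List ℕ → ℕ → ℕ
  | [], _ => 0
  | b :: bs, X => f b (X % 2 ^ w) + mapFields w v f bs (X >>> w) <<< v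

variable {w v : ℕ} {f : ℕ → ℕ → ℕ} (hf : ∀ b c, f b c < 2 ^ v)
include hf

lemma mapFields_lt : ∀ (bs : List ℕ) (X : ℕ), mapFields w v f bs X < 2 ^ (v * bs.length)
  | [], _ => by simp [mapFields]
  | b :: bs, X => by
    have := Nat.mul_le_mul_right (2 ^ v) (Nat.succ_le_of_lt (mapFields_lt bs (X >>> w)))
    rw [Nat.succ_mul, ← pow_add] at this
    rw [mapFields, List.length_cons, Nat.mul_succ, Nat.shiftLeft_eq]
    have := hf b (X % 2 ^ w)
    omega

lemma field_mapFields : ∀ {bs : List ℕ} {X i : ℕ} (hi : i < bs.length),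
    field v (mapFields w v f bs X) i = f bs[i] (field w X i)
  | b :: bs, X, i, hi => by
    have hsplit := field_add_shiftLeft (s := 1) (by simpa using hf b (X % 2 ^ w))
      (mapFields w v f bs (X >>> w)) i
    rw [Nat.mul_one] at hsplit
    rw [mapFields, hsplit]
    rcases i with _ | i
    · rw [if_pos one_pos, List.getElem_cons_zero, field, field, Nat.mul_zero, Nat.mul_zero,
        pow_zero, Nat.div_one, Nat.div_one, Nat.mod_eq_of_lt (hf _ _)]
    · have hshift := field_shiftRight w X 1 i
      rw [Nat.mul_one] at hshift
      rw [if_neg (by omega), Nat.add_sub_cancel, field_mapFields (Nat.lt_of_succ_lt_succ hi),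
        hshift, List.getElem_cons_succ]

end PackedFieldMaps

section TensorMap

/-- The binomial coefficients `n.choose 0, …, n.choose n`. -/
def binomials (n : ℕ) : List ℕ := (List.range (n + 1)).map n.choose

lemma length_binomials (n : ℕ) : (binomials n).length = n + 1 := by simp [binomials]

lemma getElem_binomials {n i : ℕ} (hi : i < (binomials n).length) :
    (binomials n)[i] = n.choose i := by simp [binomials]

/-- Applies `f` to `n + 1` fields, changing their width from `w` to `v`. The first argument of `f`
at the `i`-th field is `n.choose i * b`. -/
def binomialMap (w v n : ℕ) (f : ℕ → ℕ → ℕ) (b : ℕ) : ℕ → ℕ :=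
  mapFields w v (fun c => f (c * b)) (binomials n)

/-- Applies `f` to the fields of a coefficient tensor, changing their width from `w` to `v`. The
first argument of `f` is the product of the binomial coefficients belonging to the position. -/
def tensorMap (w v : ℕ) (d : Fin 3 → ℕ) (f : ℕ → ℕ → ℕ) : ℕ → ℕ :=
  binomialMap (w * (d 0 + 1) * (d 1 + 1)) (v * (d 0 + 1) * (d 1 + 1)) (d 2)
    (binomialMap (w * (d 0 + 1)) (v * (d 0 + 1)) (d 1) (binomialMap w v (d 0) f)) 1

variable {w v n : ℕ} {d : Fin 3 → ℕ}

lemma field_tensorIndex {i j : ℕ} (hi : i ≤ d 0) (hj : j ≤ d 1) (w k X : ℕ) :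
    field w X (tensorIndex d i j k) =
      field w (field (w * (d 0 + 1)) (field (w * (d 0 + 1) * (d 1 + 1)) X k) j) i := by
  rw [field_field (Nat.lt_succ_of_le hj), field_field (Nat.lt_succ_of_le hi), tensorIndex]
  congr 1
  simp only [Nat.succ_eq_add_one]
  ring

section

variable {f : ℕ → ℕ → ℕ} (hf : ∀ b c, f b c < 2 ^ v)
include hf

lemma binomialMap_lt (b X : ℕ) : binomialMap w v n f b X < 2 ^ (v * (n + 1)) :=
  length_binomials n ▸ mapFields_lt (fun _ _ => hf _ _) (binomials n) X

lemma field_binomialMap {i : ℕ} (hi : i ≤ n) (b X : ℕ) :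
    field v (binomialMap w v n f b X) i = f (n.choose i * b) (field w X i) := by
  have hi : i < (binomials n).length := length_binomials n ▸ Nat.lt_succ_of_le hi
  rw [binomialMap, field_mapFields (fun _ _ => hf _ _) hi, getElem_binomials]

lemma tensorMap_lt (X : ℕ) : tensorMap w v d f X < 2 ^ (v * tensorSize d) := by
  rw [tensorSize, ← Nat.mul_assoc, ← Nat.mul_assoc]
  exact binomialMap_lt (binomialMap_lt (binomialMap_lt hf)) 1 X

lemma field_tensorMap {i j k : ℕ} (hi : i ≤ d 0) (hj : j ≤ d 1) (hk : k ≤ d 2) (X : ℕ) :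
    field v (tensorMap w v d f X) (tensorIndex d i j k) =
      f ((d 0).choose i * ((d 1).choose j * (d 2).choose k)) (field w X (tensorIndex d i j k)) := by
  rw [field_tensorIndex hi hj, field_tensorIndex hi hj, tensorMap,
    field_binomialMap (binomialMap_lt (binomialMap_lt hf)) hk,
    field_binomialMap (binomialMap_lt hf) hj, field_binomialMap hf hi, Nat.mul_one]

end

lemma field_sum_tensorIndex {a : ℕ → ℕ → ℕ → ℕ} (ha : ∀ i j k, a i j k < 2 ^ w) {i j k : ℕ}
    (hi : i ≤ d 0) (hj : j ≤ d 1) (hk : k ≤ d 2) :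
    field w (∑ i ∈ range (d 0 + 1), ∑ j ∈ range (d 1 + 1), ∑ k ∈ range (d 2 + 1),
      a i j k * 2 ^ (w * tensorIndex d i j k)) (tensorIndex d i j k) = a i j k := by
  have hnested : ∑ i ∈ range (d 0 + 1), ∑ j ∈ range (d 1 + 1), ∑ k ∈ range (d 2 + 1),
      a i j k * 2 ^ (w * tensorIndex d i j k) =
      ∑ k ∈ range (d 2 + 1), (∑ j ∈ range (d 1 + 1), (∑ i ∈ range (d 0 + 1),
        a i j k * 2 ^ (w * i)) * 2 ^ (w * (d 0 + 1) * j)) *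
          2 ^ (w * (d 0 + 1) * (d 1 + 1) * k) := by
    simp only [sum_mul]
    rw [sum_comm]
    simp only [sum_comm (s := range (d 0 + 1))]
    rw [sum_comm]
    refine sum_congr rfl fun k _ => sum_congr rfl fun j _ => sum_congr rfl fun i _ => ?_
    rw [mul_assoc, mul_assoc, ← pow_add, ← pow_add, tensorIndex]
    ring_nf
  have hrow (j k : ℕ) := sum_mul_pow_lt (fun i => ha i j k) (d 0 + 1)
  have hplane (k : ℕ) := sum_mul_pow_lt (fun j => hrow j k) (d 1 + 1)
  rw [hnested, field_tensorIndex hi hj, field_sum hplane (Nat.lt_succ_of_le hk),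
    field_sum (fun j => hrow j k) (Nat.lt_succ_of_le hj),
    field_sum (fun i => ha i j k) (Nat.lt_succ_of_le hi)]

end TensorMap

lemma bernsteinForm_eq_sum (n : ℕ) (x : ℝ) (c : ℕ → ℝ) : bernsteinForm n x c =
    ∑ i ∈ range (n + 1), n.choose i * (x ^ i * (1 - x) ^ (n - i)) * c i := by
  induction n generalizing c with
  | zero => simp [bernsteinForm]
  | succ n ih =>
    rw [bernsteinForm, ih, ih, sum_range_succ' _ (n + 1), mul_sum, mul_sum]
    simp only [Nat.choose_succ_succ, Nat.cast_add, add_mul, sum_add_distrib, Nat.add_sub_add_right]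
    have hupper : ∑ i ∈ range (n + 1), n.choose (i + 1) * (x ^ (i + 1) * (1 - x) ^ (n - i)) *
        c (i + 1) + ((n + 1).choose 0 : ℕ) * (x ^ 0 * (1 - x) ^ (n + 1 - 0)) * c 0 =
        ∑ i ∈ range (n + 1), (1 - x) * (n.choose i * (x ^ i * (1 - x) ^ (n - i)) * c i) := by
      rw [sum_range_succ, Nat.choose_succ_self, sum_range_succ' _ n]
      simp only [Nat.cast_zero, zero_mul, add_zero]
      congr 1
      · refine sum_congr rfl fun i hi => ?_
        have : n - i = n - (i + 1) + 1 := by have := mem_range.1 hi; omega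
        rw [this, pow_succ]
        ring
      · simp only [Nat.choose_zero_right, Nat.sub_zero, pow_succ]
        ring
    rw [add_assoc, hupper, add_comm]
    congr 1
    exact sum_congr rfl fun i _ => by ring

section Quantization

variable {w s M : ℕ} {d : Fin 3 → ℕ} {e : PolyExpr} {a : Fin 3 → ℝ}

/-- The value of the `i`-th variable in the Kronecker substitution for fields of width `w`: the
monomial with exponents `i, j, k` becomes a `1` in the field at `tensorIndex d i j k`. -/
def kroneckerPoint (w : ℕ) (d : Fin 3 → ℕ) (i : Fin 3) : ℕ := 2 ^ (w * (tensorAxis d i).stride)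

/-- The array with `2 ^ (w - 1)` in each field of a coefficient tensor. -/
def kroneckerBias (w : ℕ) (d : Fin 3 → ℕ) : ℕ :=
  let r (i : Fin 3) := repunit (w * (tensorAxis d i).stride) (d i + 1)
  2 ^ (w - 1) * (r 0 * (r 1 * r 2))

/-- The array of the coefficients of the numerator of `e`, with `2 ^ (w - 1)` added to each. -/
def kroneckerCode (w : ℕ) (d : Fin 3 → ℕ) (e : PolyExpr) : ℕ :=
  (e.numerator (fun i => (kroneckerPoint w d i : ℤ)) + kroneckerBias w d).toNat

lemma kroneckerPoint_monomial (w : ℕ) (d : Fin 3 → ℕ) (i j k : ℕ) :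
    kroneckerPoint w d 0 ^ i * kroneckerPoint w d 1 ^ j * kroneckerPoint w d 2 ^ k =
      2 ^ (w * tensorIndex d i j k) := by
  simp only [kroneckerPoint, ← pow_mul, ← pow_add]
  congr 1
  change w * 1 * i + w * (d 0 + 1) * j + w * ((d 0 + 1) * (d 1 + 1)) * k =
    w * (i + (d 0 + 1) * j + (d 0 + 1) * (d 1 + 1) * k)
  ring

lemma kroneckerBias_eq_sum (hw : 0 < w) (d : Fin 3 → ℕ) : kroneckerBias w d =
    ∑ i ∈ range (d 0 + 1), ∑ j ∈ range (d 1 + 1), ∑ k ∈ range (d 2 + 1),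
      2 ^ (w - 1) * 2 ^ (w * tensorIndex d i j k) := by
  have hrepunit (i : Fin 3) : repunit (w * (tensorAxis d i).stride) (d i + 1) =
      ∑ t ∈ range (d i + 1), kroneckerPoint w d i ^ t :=
    repunit_eq_sum (Nat.mul_pos hw (stride_tensorAxis_pos d i)) _
  simp only [kroneckerBias, hrepunit]
  rw [sum_mul_sum (range (d 1 + 1)), sum_mul_sum]
  simp only [mul_sum, ← kroneckerPoint_monomial, mul_assoc]

lemma numerator_kroneckerPoint (w : ℕ) (e : PolyExpr) :
    e.numerator (fun i => (kroneckerPoint w e.degree i : ℤ)) =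
      ∑ i ∈ range (e.degree 0 + 1), ∑ j ∈ range (e.degree 1 + 1), ∑ k ∈ range (e.degree 2 + 1),
        e.coeff i j k * 2 ^ (w * tensorIndex e.degree i j k) := by
  rw [PolyExpr.numerator_eq_sum]
  refine sum_congr rfl fun i _ => sum_congr rfl fun j _ => sum_congr rfl fun k _ => ?_
  rw [Int.cast_id]
  exact congrArg _ (by exact_mod_cast kroneckerPoint_monomial w e.degree i j k)

lemma field_kroneckerCode (hw : 0 < w) (he : e.l1Bound < 2 ^ (w - 1)) {i j k : ℕ}
    (hi : i ≤ e.degree 0) (hj : j ≤ e.degree 1) (hk : k ≤ e.degree 2) :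
    (field w (kroneckerCode w e.degree e) (tensorIndex e.degree i j k) : ℤ) =
      e.coeff i j k + 2 ^ (w - 1) := by
  have hcoeff (i j k : ℕ) : 0 ≤ e.coeff i j k + 2 ^ (w - 1) ∧
      e.coeff i j k + 2 ^ (w - 1) < 2 ^ w := by
    have hbound : (e.l1Bound : ℤ) < 2 ^ (w - 1) := by exact_mod_cast he
    have := abs_lt.1 ((e.abs_coeff_le i j k).trans_lt hbound)
    have : (2 : ℤ) ^ w = 2 ^ (w - 1) + 2 ^ (w - 1) := by
      rw [← two_mul, ← pow_succ', Nat.sub_add_cancel hw]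
    constructor <;> linarith
  have htoNat (i j k : ℕ) := Int.toNat_of_nonneg (hcoeff i j k).1
  have hcode : kroneckerCode w e.degree e =
      ∑ i ∈ range (e.degree 0 + 1), ∑ j ∈ range (e.degree 1 + 1), ∑ k ∈ range (e.degree 2 + 1),
        (e.coeff i j k + 2 ^ (w - 1)).toNat * 2 ^ (w * tensorIndex e.degree i j k) := by
    rw [kroneckerCode, numerator_kroneckerPoint, kroneckerBias_eq_sum hw]
    refine (congrArg Int.toNat ?_).trans (Int.toNat_natCast _)
    push_cast [htoNat]
    simp only [add_mul, sum_add_distrib]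
  rw [hcode, field_sum_tensorIndex (fun i j k => ?_) hi hj hk, htoNat]
  exact_mod_cast (htoNat i j k).trans_lt (hcoeff i j k).2

/-- The integer part of `M + (c - 2 ^ (w - 1)) / (b * 2 ^ s)`. The value `2 ^ 63`, which does not
fit into a word of 63 bits, signals that this number is negative. -/
def quantize (w s M b c : ℕ) : ℕ :=
  if 2 ^ (w - 1) ≤ c + b * 2 ^ s * M then (c + b * 2 ^ s * M - 2 ^ (w - 1)) / (b * 2 ^ s) % 2 ^ 64
  else 2 ^ 63

lemma quantize_lt (w s M b c : ℕ) : quantize w s M b c < 2 ^ 64 := by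
  unfold quantize
  split_ifs
  · exact Nat.mod_lt _ (by norm_num)
  · norm_num

lemma quantize_le {b c : ℕ} {z : ℤ} (hb : 0 < b) (hc : (c : ℤ) = z + 2 ^ (w - 1))
    (h : quantize w s M b c < 2 ^ 63) : (quantize w s M b c : ℝ) ≤ M + z / b / 2 ^ s := by
  unfold quantize at h ⊢
  split_ifs at h ⊢ with hle
  · have hc : (c : ℝ) = z + 2 ^ (w - 1) := by exact_mod_cast hc
    refine (Nat.cast_le.2 (Nat.mod_le _ _)).trans (Nat.cast_div_le.trans (le_of_eq ?_))
    rw [Nat.cast_sub hle]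
    push_cast
    rw [hc]
    field_simp
    ring
  · exact absurd h (lt_irrefl _)

/-- Lower bounds for the Bernstein coefficients of `M + e / 2 ^ s`, where `d` is the degree of `e`
and the numerator of `e` is computed by Kronecker substitution with fields of width `w`. -/
def wordCoeffs (w s M : ℕ) (d : Fin 3 → ℕ) (e : PolyExpr) : ℕ :=
  tensorMap w 64 d (quantize w s M) (kroneckerCode w d e)

lemma bernsteinForm_coeff_div_choose (a : Fin 3 → ℝ) (e : PolyExpr) :
    bernsteinForm (e.degree 0) (a 0) (fun i => bernsteinForm (e.degree 1) (a 1) fun j =>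
      bernsteinForm (e.degree 2) (a 2) fun k => (e.coeff i j k : ℝ) /
        ((e.degree 0).choose i * ((e.degree 1).choose j * (e.degree 2).choose k) : ℕ)) =
      e.eval a := by
  rw [PolyExpr.eval_eq_sum]
  simp only [bernsteinForm_eq_sum, mul_sum]
  refine sum_congr rfl fun i hi => sum_congr rfl fun j hj => sum_congr rfl fun k hk => ?_
  have hpos {n i : ℕ} (hi : i ∈ range (n + 1)) : (n.choose i : ℝ) ≠ 0 :=
    Nat.cast_ne_zero.2 (Nat.choose_pos (Nat.lt_succ_iff.1 (mem_range.1 hi))).ne'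
  have := hpos hi
  have := hpos hj
  have := hpos hk
  push_cast
  field_simp

lemma tensorForm_wordCoeffs_le (hw : 0 < w) (hd : e.degree = d) (he : e.l1Bound < 2 ^ (w - 1))
    (hX : IsWordArray (wordCoeffs w s M d e)) (ha : ∀ i, a i ∈ Set.Icc (0 : ℝ) 1) :
    tensorForm d (wordCoeffs w s M d e) a ≤ M + e.eval a / 2 ^ s := by
  subst hd
  calc tensorForm e.degree (wordCoeffs w s M e.degree e) a
      ≤ bernsteinForm (e.degree 0) (a 0) fun i => bernsteinForm (e.degree 1) (a 1) fun j =>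
          bernsteinForm (e.degree 2) (a 2) fun k => M + (2 ^ s)⁻¹ * ((e.coeff i j k : ℝ) /
            ((e.degree 0).choose i * ((e.degree 1).choose j * (e.degree 2).choose k) : ℕ)) := by
        refine bernsteinForm_mono (ha 0) fun i hi => bernsteinForm_mono (ha 1) fun j hj =>
          bernsteinForm_mono (ha 2) fun k hk => ?_
        have hword := hX (tensorIndex e.degree i j k)
        rw [wordCoeffs, field_tensorMap (quantize_lt w s M) hi hj hk] at hword ⊢
        rw [inv_mul_eq_div]
        exact quantize_le (Nat.mul_pos (Nat.choose_pos hi)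
          (Nat.mul_pos (Nat.choose_pos hj) (Nat.choose_pos hk)))
          (field_kroneckerCode hw he hi hj hk) hword
    _ = M + e.eval a / 2 ^ s := by
        simp only [bernsteinForm_add, bernsteinForm_const, bernsteinForm_const_mul,
          bernsteinForm_coeff_div_choose]
        rw [inv_mul_eq_div]

/-- Whether the top bits of the first `n` words of `X` vanish. -/
def topBitsVanish (n X : ℕ) : Bool := X &&& (2 ^ 63 * repunit 64 n) == 0

lemma isWordArray_of_topBitsVanish {n X : ℕ} (hX : X < 2 ^ (64 * n)) (h : topBitsVanish n X) :
    IsWordArray X := fun i => by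
  rcases lt_or_ge i n with hi | hi
  · have htop := congrArg (field 64 · i) (beq_iff_eq.1 h)
    simp only [field_land, field_mul_repunit_one (w := 64) (a := 2 ^ 63) (by norm_num)
      (by norm_num), if_pos hi, field_zero, Nat.and_two_pow] at htop
    refine lt_of_not_ge fun hge => ?_
    have hbit : (field 64 X i).testBit 63 = true :=
      Nat.testBit_of_two_pow_le_and_two_pow_add_one_gt hge (field_lt 64 X i)
    simp [hbit] at htop
  · rw [field_eq_zero_of_lt hX hi]
    norm_num

lemma isWordArray_wordCoeffs (h : topBitsVanish (tensorSize d) (wordCoeffs w s M d e)) :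
    IsWordArray (wordCoeffs w s M d e) :=
  isWordArray_of_topBitsVanish (tensorMap_lt (quantize_lt w s M) _) h

end Quantization

section CertificatePolynomials

section Definitions

variable {α : Type*} [Add α] [Mul α] [Sub α] [IntCast α]

/-- Powers in a type without the axioms of a monoid, such as `PolyExpr`. -/
def power (a : α) : ℕ → α
  | 0 => (1 : ℤ)
  | n + 1 => power a n * a

/-- The binary form `y ^ r * (c₀ * x ^ n + c₁ * x ^ (n - 1) * y + ⋯ + cₙ * y ^ n)` at `p = (x, y)`,
with the list of coefficients `c₀, …, cₙ`. -/
def binaryForm (p : α × α) : ℕ → List ℤ → α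
  | _, [] => (0 : ℤ)
  | r, c :: l => c * (power p.1 l.length * power p.2 r) + binaryForm p (r + 1) l

/-- The number `2 * u`, where `u` is represented by the pair `p = (2 * (u + 1) / 3, 1 - p.1)`. -/
def doubled (p : α × α) : α := p.1 - (2 : ℤ) * p.2

/-- The polynomials `gegenbauer (m + 2)` multiplied by `m * (m + 1) * ⋯ * (m + k - 1)`, which makes
the coefficients integers. -/
def scaledGegenbauer (m : ℕ) (s w : α) : ℕ → α
  | 0 => (1 : ℤ)
  | 1 => (m : ℤ) * s
  | k + 2 => ((2 * k + m + 2 : ℕ) : ℤ) * (s * scaledGegenbauer m s w (k + 1)) -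
      (((k + 1) * (k + m) : ℕ) : ℤ) * (w * scaledGegenbauer m s w k)

/-- The positive semidefinite kernel `∑ i, f i p * f i q`, where the `f i` are the binary forms
given by the rows of a triangular matrix, starting with row `r`. -/
def rowKernel (p q : α × α) : ℕ → List (List ℤ) → α
  | _, [] => (0 : ℤ)
  | r, l :: ls => binaryForm p r l * binaryForm q r l + rowKernel p q (r + 1) ls

/-- A combination of the three-point kernels of Bachoc and Vallentin in dimension `m + 3`. For
points `x, y, z` of the sphere the arguments `p, q` represent the inner products of `x` with `y` and
`z`, and `t` is twice the inner product of `y` and `z`. The head of the list belongs to the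
Gegenbauer polynomial of degree `k`. -/
def threePointKernel (m : ℕ) (p q : α × α) (t : α) : ℕ → List (ℕ × List (List ℤ)) → α
  | _, [] => (0 : ℤ)
  | k, b :: bs => (b.1 : ℤ) * (scaledGegenbauer m ((2 : ℤ) * t - doubled p * doubled q)
      (((4 : ℤ) - doubled p * doubled p) * ((4 : ℤ) - doubled q * doubled q)) k *
        rowKernel p q 0 b.2) + threePointKernel m p q t (k + 1) bs

/-- A combination of Gegenbauer polynomials in dimension `m + 2`, where `u` is twice an inner
product. The head of the list belongs to degree `k`. -/
def twoPointKernel (m : ℕ) (u : α) : ℕ → List ℕ → α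
  | _, [] => (0 : ℤ)
  | k, b :: bs => (b : ℤ) * scaledGegenbauer m u (4 : ℤ) k + twoPointKernel m u (k + 1) bs

end Definitions

/-- Compatibility with the integer constants and the operations of the two types. -/
structure PreservesArithmetic {α β : Type*} [Add α] [Mul α] [Sub α] [IntCast α] [Add β] [Mul β]
    [Sub β] [IntCast β] (f : α → β) : Prop where
  intCast (z : ℤ) : f z = z
  add (a b : α) : f (a + b) = f a + f b
  mul (a b : α) : f (a * b) = f a * f b
  sub (a b : α) : f (a - b) = f a - f b

lemma preservesArithmetic_eval (a : Fin 3 → ℝ) : PreservesArithmetic (PolyExpr.eval a) where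
  intCast _ := rfl
  add _ _ := rfl
  mul _ _ := rfl
  sub e f := by
    change e.eval a + ((-1 : ℤ) : ℝ) * f.eval a = e.eval a - f.eval a
    push_cast
    ring

lemma preservesArithmetic_intCast : PreservesArithmetic ((↑) : ℤ → ℝ) where
  intCast _ := rfl
  add := Int.cast_add
  mul := Int.cast_mul
  sub := Int.cast_sub

namespace PreservesArithmetic

variable {α β : Type*} [Add α] [Mul α] [Sub α] [IntCast α] [Add β] [Mul β] [Sub β] [IntCast β]
  {f : α → β} (hf : PreservesArithmetic f)
include hf

lemma map_power (a : α) : ∀ n : ℕ, f (power a n) = power (f a) n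
  | 0 => hf.intCast 1
  | n + 1 => by rw [power, power, hf.mul, map_power a n]

lemma map_binaryForm (p : α × α) : ∀ (r : ℕ) (l : List ℤ),
    f (binaryForm p r l) = binaryForm (p.map f f) r l
  | _, [] => hf.intCast 0
  | r, c :: l => by
    rw [binaryForm, binaryForm, hf.add, hf.mul, hf.mul, hf.intCast, hf.map_power, hf.map_power,
      map_binaryForm p (r + 1) l, Prod.map_fst, Prod.map_snd]

lemma map_doubled (p : α × α) : f (doubled p) = doubled (p.map f f) := by
  rw [doubled, doubled, hf.sub, hf.mul, hf.intCast, Prod.map_fst, Prod.map_snd]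

lemma map_scaledGegenbauer (m : ℕ) (s w : α) : ∀ k : ℕ,
    f (scaledGegenbauer m s w k) = scaledGegenbauer m (f s) (f w) k
  | 0 => hf.intCast 1
  | 1 => by rw [scaledGegenbauer, scaledGegenbauer, hf.mul, hf.intCast]
  | k + 2 => by
    rw [scaledGegenbauer, scaledGegenbauer]
    simp only [hf.sub, hf.mul, hf.intCast, map_scaledGegenbauer m s w k,
      map_scaledGegenbauer m s w (k + 1)]

lemma map_rowKernel (p q : α × α) : ∀ (r : ℕ) (rows : List (List ℤ)),
    f (rowKernel p q r rows) = rowKernel (p.map f f) (q.map f f) r rows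
  | _, [] => hf.intCast 0
  | r, l :: ls => by
    rw [rowKernel, rowKernel, hf.add, hf.mul, hf.map_binaryForm, hf.map_binaryForm,
      map_rowKernel p q (r + 1) ls]

lemma map_threePointKernel (m : ℕ) (p q : α × α) (t : α) : ∀ (k : ℕ) (bs : List _),
    f (threePointKernel m p q t k bs) = threePointKernel m (p.map f f) (q.map f f) (f t) k bs
  | _, [] => hf.intCast 0
  | k, b :: bs => by
    simp only [threePointKernel, hf.add, hf.sub, hf.mul, hf.intCast, hf.map_scaledGegenbauer,
      hf.map_doubled, hf.map_rowKernel, map_threePointKernel m p q t (k + 1) bs]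

lemma map_twoPointKernel (m : ℕ) (u : α) : ∀ (k : ℕ) (bs : List ℕ),
    f (twoPointKernel m u k bs) = twoPointKernel m (f u) k bs
  | _, [] => hf.intCast 0
  | k, b :: bs => by
    rw [twoPointKernel, twoPointKernel, hf.add, hf.mul, hf.intCast, hf.map_scaledGegenbauer,
      hf.intCast, map_twoPointKernel m u (k + 1) bs]

end PreservesArithmetic

end CertificatePolynomials

section KernelPositivity

lemma scaledGegenbauer_eq (m : ℕ) (a s w : ℝ) : ∀ k : ℕ, scaledGegenbauer m (a * s) (a ^ 2 * w) k =
    a ^ k * m.ascFactorial k * gegenbauer (m + 2) s w k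
  | 0 => by simp [scaledGegenbauer, gegenbauer]
  | 1 => by
    simp only [scaledGegenbauer, gegenbauer, Nat.ascFactorial_succ, Nat.ascFactorial_zero]
    push_cast
    ring
  | k + 2 => by
    have hden : (k : ℝ) + (m + 2) - 1 = k + m + 1 := by ring
    rw [scaledGegenbauer, scaledGegenbauer_eq m a s w k, scaledGegenbauer_eq m a s w (k + 1),
      gegenbauer, hden]
    simp only [Nat.ascFactorial_succ]
    push_cast
    field_simp
    ring

/-- The coordinates representing `u ∈ [-1, 1 / 2]` by `x ∈ [0, 1]` and its complement `1 - x`. -/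
noncomputable def unitCoords (u : ℝ) : ℝ × ℝ := (2 * (u + 1) / 3, 1 - 2 * (u + 1) / 3)

lemma doubled_unitCoords (u : ℝ) : doubled (unitCoords u) = 2 * u := by
  rw [doubled, unitCoords]
  push_cast
  ring

lemma rowKernel_comm (p q : ℝ × ℝ) : ∀ (r : ℕ) (rows : List (List ℤ)),
    rowKernel p q r rows = rowKernel q p r rows
  | _, [] => rfl
  | r, l :: ls => by rw [rowKernel, rowKernel, mul_comm, rowKernel_comm p q (r + 1) ls]

lemma threePointKernel_comm (m : ℕ) (p q : ℝ × ℝ) (t : ℝ) : ∀ (k : ℕ) (bs : List _),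
    threePointKernel m p q t k bs = threePointKernel m q p t k bs
  | _, [] => rfl
  | k, b :: bs => by
    rw [threePointKernel, threePointKernel, threePointKernel_comm m p q t (k + 1) bs,
      rowKernel_comm, mul_comm (doubled p) (doubled q), mul_comm (_ - doubled p * doubled p)]

lemma sum_sum_mul_rowKernel_nonneg {ι : Type*} {T : Finset ι} {p : ι → ℝ × ℝ} {g : ι → ι → ℝ}
    (hg : ∀ c : ι → ℝ, 0 ≤ ∑ y ∈ T, ∑ z ∈ T, c y * c z * g y z) :
    ∀ (r : ℕ) (rows : List (List ℤ)),
      0 ≤ ∑ y ∈ T, ∑ z ∈ T, g y z * rowKernel (p y) (p z) r rows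
  | _, [] => by simp [rowKernel]
  | r, l :: ls => by
    simp only [rowKernel, mul_add, sum_add_distrib]
    refine add_nonneg ((hg fun y => binaryForm (p y) r l).trans_eq ?_)
      (sum_sum_mul_rowKernel_nonneg hg (r + 1) ls)
    exact sum_congr rfl fun y _ => sum_congr rfl fun z _ => mul_comm _ _

variable {E : Type*} [NormedAddCommGroup E] [InnerProductSpace ℝ E] [FiniteDimensional ℝ E]
  {m : ℕ} {T : Finset E}

lemma sum_sum_twoPointKernel_nonneg (hE : Module.finrank ℝ E = m + 2) (hT : ∀ y ∈ T, ‖y‖ = 1) :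
    ∀ (k : ℕ) (bs : List ℕ), 0 ≤ ∑ y ∈ T, ∑ z ∈ T, twoPointKernel m (2 * inner ℝ y z) k bs
  | _, [] => by simp [twoPointKernel]
  | k, b :: bs => by
    have hgegenbauer (u : ℝ) : scaledGegenbauer m (2 * u) ((4 : ℤ) : ℝ) k =
        2 ^ k * m.ascFactorial k * gegenbauer (m + 2) u 1 k := by
      rw [← scaledGegenbauer_eq]
      norm_num
    have hdim : (Module.finrank ℝ E : ℝ) = m + 2 := by exact_mod_cast hE
    have h := sum_sum_gegenbauer_inner_nonneg (E := E) (by omega) hT k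
    rw [hdim] at h
    simp only [twoPointKernel, sum_add_distrib, hgegenbauer, ← mul_sum, Int.cast_natCast]
    exact add_nonneg (by positivity) (sum_sum_twoPointKernel_nonneg hE hT (k + 1) bs)

lemma sum_sum_threePointKernel_nonneg (hE : Module.finrank ℝ E = m + 3) {x : E} (hx : ‖x‖ = 1)
    (hT : ∀ y ∈ T, ‖y‖ = 1) : ∀ (k : ℕ) (bs : List _),
      0 ≤ ∑ y ∈ T, ∑ z ∈ T, threePointKernel m (unitCoords (inner ℝ x y))
        (unitCoords (inner ℝ x z)) (2 * inner ℝ y z) k bs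
  | _, [] => by simp [threePointKernel]
  | k, b :: bs => by
    have hgegenbauer (u v t : ℝ) : scaledGegenbauer m (((2 : ℤ) : ℝ) * (2 * t) - 2 * u * (2 * v))
        ((((4 : ℤ) : ℝ) - 2 * u * (2 * u)) * (((4 : ℤ) : ℝ) - 2 * v * (2 * v))) k =
        4 ^ k * m.ascFactorial k *
          gegenbauer (m + 2) (t - u * v) ((1 - u ^ 2) * (1 - v ^ 2)) k := by
      rw [← scaledGegenbauer_eq]
      congr 1 <;> push_cast <;> ring
    have h := sum_sum_mul_rowKernel_nonneg (p := fun y => unitCoords (inner ℝ x y))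
      (fun c => sum_sum_mul_gegenbauer_projection_nonneg (n := m + 2) (by omega) hE hx hT c k) 0 b.2
    rw [Nat.cast_add, Nat.cast_ofNat] at h
    simp only [threePointKernel, doubled_unitCoords, sum_add_distrib, hgegenbauer, ← mul_sum,
      Int.cast_natCast, mul_assoc ((4 : ℝ) ^ k * _)]
    exact add_nonneg (by positivity) (sum_sum_threePointKernel_nonneg hE hx hT (k + 1) bs)

end KernelPositivity

/-- A polynomial together with the parameters of its conversion to an array of words: the Bernstein
coefficients of `bias + expr / 2 ^ shift`, rounded down, where `width` is the number of bits of a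
field in the Kronecker substitution. -/
structure WordEncoding where
  expr : PolyExpr
  degree : Fin 3 → ℕ
  width : ℕ
  shift : ℕ
  bias : ℕ

namespace WordEncoding

/-- The array of words. -/
def coeffs (F : WordEncoding) : ℕ := wordCoeffs F.width F.shift F.bias F.degree F.expr

/-- The parameters leave enough room for all coefficients. -/
structure IsSound (F : WordEncoding) : Prop where
  width_pos : 0 < F.width
  degree_eq : F.expr.degree = F.degree
  l1Bound_lt : F.expr.l1Bound < 2 ^ (F.width - 1)
  topBitsVanish : topBitsVanish (tensorSize F.degree) F.coeffs

/-- The assertion that `F` is nonnegative wherever `C` is nonpositive, with rounding errors taken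
into account. -/
def problem (F C : WordEncoding) : BoundProblem := ⟨F.degree, F.bias, C.degree, C.bias⟩

/-- The cell on which `problem F C` is to be verified. -/
def cell (F C : WordEncoding) : Cell := .root F.coeffs C.coeffs

variable {F C : WordEncoding} {a : Fin 3 → ℝ}

lemma IsSound.isWordArray (hF : F.IsSound) : IsWordArray F.coeffs :=
  isWordArray_wordCoeffs hF.topBitsVanish

lemma isPacked_cell (hF : F.IsSound) (hC : C.IsSound) : (cell F C).IsPacked :=
  ⟨hF.isWordArray, hC.isWordArray⟩

lemma IsSound.tensorForm_coeffs_le (hF : F.IsSound) (ha : ∀ i, a i ∈ Set.Icc (0 : ℝ) 1) :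
    tensorForm F.degree F.coeffs a ≤ F.bias + F.expr.eval a / 2 ^ F.shift :=
  tensorForm_wordCoeffs_le hF.width_pos hF.degree_eq hF.l1Bound_lt hF.isWordArray ha

lemma eval_nonneg_of_holdsOn (hF : F.IsSound) (hC : C.IsSound)
    (h : (problem F C).HoldsOn (cell F C)) (ha : ∀ i, a i ∈ Set.Icc (0 : ℝ) 1) (h₀₁ : a 0 ≤ a 1)
    (h₁₂ : a 1 ≤ a 2) (hconstraint : C.expr.eval a ≤ 0) : 0 ≤ F.expr.eval a := by
  have hC_le : tensorForm C.degree C.coeffs a ≤ C.bias :=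
    (hC.tensorForm_coeffs_le ha).trans
      (add_le_of_nonpos_right (div_nonpos_of_nonpos_of_nonneg hconstraint (by positivity)))
  have hF_ge : (F.bias : ℝ) ≤ F.bias + F.expr.eval a / 2 ^ F.shift :=
    (h.le_tensorForm ha h₀₁ h₁₂ hC_le).trans (hF.tensorForm_coeffs_le ha)
  rwa [le_add_iff_nonneg_right, le_div_iff₀ (by positivity), zero_mul] at hF_ge

end WordEncoding

/-- Data for a three-point bound `bound` for kissing configurations in dimension `order + 3`: the
coefficients of a positive definite two-point kernel `A` and of a positive definite three-point
kernel `G`, the polynomial `h` distributing the sum of `G` over triples to the pairs contained in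
them, and the amount `scale` by which the pair inequality is strict. -/
structure Certificate where
  order : ℕ
  bound : ℕ
  scale : ℕ
  twoPoint : List ℕ
  threePoint : List (ℕ × List (List ℤ))
  multiplier : List ℤ

namespace Certificate

section Polynomials

variable {α : Type*} [Add α] [Mul α] [Sub α] [IntCast α] (c : Certificate)

/-- `h(p) + h(q) + h(r) - G(p, q, r) - G(p, r, q) - G(q, r, p)`. -/
def tripleSlack (p q r : α × α) : α :=
  binaryForm p 0 c.multiplier + binaryForm q 0 c.multiplier + binaryForm r 0 c.multiplier -
    (threePointKernel c.order p q (doubled r) 0 c.threePoint +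
      threePointKernel c.order p r (doubled q) 0 c.threePoint +
      threePointKernel c.order q r (doubled p) 0 c.threePoint)

/-- `-scale - A(p) - G(p, p, 1) - (bound - 1) * h(p)`. -/
def pairSlack (p : α × α) : α :=
  ((-c.scale : ℤ) : α) - twoPointKernel (c.order + 1) (doubled p) 0 c.twoPoint -
    threePointKernel c.order p p (2 : ℤ) 0 c.threePoint -
    ((c.bound - 1 : ℤ) : α) * binaryForm p 0 c.multiplier

/-- The Gram determinant of three unit vectors, multiplied by `-4`. -/
def gramDefect (p q r : α × α) : α :=
  doubled p * doubled p + doubled q * doubled q + doubled r * doubled r - (4 : ℤ) -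
    doubled p * doubled q * doubled r

end Polynomials

/-- The inequalities between polynomials under which the certificate proves its bound. -/
structure IsValid (c : Certificate) : Prop where
  tripleSlack_nonneg (u v t : ℝ) : -1 ≤ u → u ≤ v → v ≤ t → t ≤ 1 / 2 → 0 ≤ gramDet u v t →
    0 ≤ c.tripleSlack (unitCoords u) (unitCoords v) (unitCoords t)
  pairSlack_nonneg (u : ℝ) : -1 ≤ u → u ≤ 1 / 2 → 0 ≤ c.pairSlack (unitCoords u)
  twoPointKernel_lt : twoPointKernel (c.order + 1) (2 : ℤ) 0 c.twoPoint < c.scale * c.bound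

variable {c : Certificate}

lemma tripleSlack_swap_left (p q r : ℝ × ℝ) : c.tripleSlack p q r = c.tripleSlack q p r := by
  rw [tripleSlack, tripleSlack, threePointKernel_comm c.order p q]
  ring

lemma tripleSlack_swap_right (p q r : ℝ × ℝ) : c.tripleSlack p q r = c.tripleSlack p r q := by
  rw [tripleSlack, tripleSlack, threePointKernel_comm c.order q r]
  ring

lemma forall_of_forall_sorted {α : Type*} [LinearOrder α] {P : α → α → α → Prop}
    (hleft : ∀ u v t, P u v t → P v u t) (hright : ∀ u v t, P u v t → P u t v)
    (hsorted : ∀ u v t, u ≤ v → v ≤ t → P u v t) (u v t : α) : P u v t := by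
  rcases le_total u v with huv | hvu <;> rcases le_total v t with hvt | htv <;>
    rcases le_total u t with hut | htu
  · exact hsorted u v t huv hvt
  · exact hsorted u v t huv hvt
  · exact hright _ _ _ (hsorted u t v hut htv)
  · exact hright _ _ _ (hleft _ _ _ (hsorted t u v htu huv))
  · exact hleft _ _ _ (hsorted v u t hvu hut)
  · exact hleft _ _ _ (hright _ _ _ (hsorted v t u hvt htu))
  · exact hleft _ _ _ (hright _ _ _ (hleft _ _ _ (hsorted t v u htv hvu)))
  · exact hleft _ _ _ (hright _ _ _ (hleft _ _ _ (hsorted t v u htv hvu)))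

lemma IsValid.tripleSlack_nonneg_of_mem_Icc (hc : c.IsValid) {u v t : ℝ}
    (hu : u ∈ Set.Icc (-1) (1 / 2)) (hv : v ∈ Set.Icc (-1) (1 / 2)) (ht : t ∈ Set.Icc (-1) (1 / 2))
    (hgram : 0 ≤ gramDet u v t) :
    0 ≤ c.tripleSlack (unitCoords u) (unitCoords v) (unitCoords t) := by
  refine forall_of_forall_sorted (P := fun u v t : ℝ => u ∈ Set.Icc (-1) (1 / 2) →
    v ∈ Set.Icc (-1) (1 / 2) → t ∈ Set.Icc (-1) (1 / 2) → 0 ≤ gramDet u v t →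
      0 ≤ c.tripleSlack (unitCoords u) (unitCoords v) (unitCoords t))
    ?swap_left ?swap_right ?sorted u v t hu hv ht hgram
  case swap_left =>
    intro u v t h hv hu ht hgram
    rw [tripleSlack_swap_left]
    exact h hu hv ht (hgram.trans_eq (by rw [gramDet, gramDet]; ring))
  case swap_right =>
    intro u v t h hu ht hv hgram
    rw [tripleSlack_swap_right]
    exact h hu hv ht (hgram.trans_eq (by rw [gramDet, gramDet]; ring))
  case sorted =>
    exact fun u v t huv hvt hu _ ht => hc.tripleSlack_nonneg u v t hu.1 huv hvt ht.2

lemma IsValid.twoPointKernel_two_lt (hc : c.IsValid) :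
    twoPointKernel (c.order + 1) (2 * 1 : ℝ) 0 c.twoPoint < c.scale * c.bound := by
  have h := preservesArithmetic_intCast.map_twoPointKernel (c.order + 1) 2 0 c.twoPoint
  rw [Int.cast_ofNat] at h
  rw [mul_one, ← h]
  exact_mod_cast hc.twoPointKernel_lt

variable {E : Type*} [NormedAddCommGroup E] [InnerProductSpace ℝ E] [FiniteDimensional ℝ E]
  {S : Finset E}

lemma IsValid.card_ne (hc : c.IsValid) (hE : Module.finrank ℝ E = c.order + 3)
    (hnorm : ∀ x ∈ S, ‖x‖ = 1) (hdist : ∀ x ∈ S, ∀ y ∈ S, x ≠ y → 1 ≤ dist x y) :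
    S.card ≠ c.bound + 1 := by
  intro hcard
  have hinner {x y : E} (hx : x ∈ S) (hy : y ∈ S) (hxy : x ≠ y) :
      inner ℝ x y ∈ Set.Icc (-1 : ℝ) (1 / 2) :=
    ⟨neg_one_le_inner (hnorm x hx) (hnorm y hy),
      inner_le_half_of_one_le_dist (hnorm x hx) (hnorm y hy) (hdist x hx y hy hxy)⟩
  have hbound := mul_card_sub_one_le_of_three_point
    (A := fun u => twoPointKernel (c.order + 1) (2 * u) 0 c.twoPoint)
    (G := fun u v t =>
      threePointKernel c.order (unitCoords u) (unitCoords v) (2 * t) 0 c.threePoint)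
    (h := fun u => binaryForm (unitCoords u) 0 c.multiplier) (c := c.scale)
    (card_pos.1 (by omega)) hnorm (sum_sum_twoPointKernel_nonneg hE hnorm 0 c.twoPoint)
    (fun x hx T hT => sum_sum_threePointKernel_nonneg hE (hnorm x hx)
      (fun y hy => hnorm y (hT hy)) 0 c.threePoint)
    (fun x hx y hy z hz hxy hxz hyz => by
      have h := hc.tripleSlack_nonneg_of_mem_Icc (hinner hx hy hxy) (hinner hx hz hxz)
        (hinner hy hz hyz) (gramDet_inner_nonneg (hnorm x hx) (hnorm y hy) (hnorm z hz))
      rw [tripleSlack, doubled_unitCoords, doubled_unitCoords, doubled_unitCoords] at h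
      linarith)
    (fun x hx y hy hxy => by
      have h := hc.pairSlack_nonneg _ (hinner hx hy hxy).1 (hinner hx hy hxy).2
      rw [pairSlack, doubled_unitCoords] at h
      push_cast at h
      rw [hcard, mul_one]
      push_cast
      linarith)
  rw [hcard] at hbound
  push_cast at hbound
  linarith [hc.twoPointKernel_two_lt]

theorem IsValid.card_le (hc : c.IsValid) (hE : Module.finrank ℝ E = c.order + 3)
    (hnorm : ∀ x ∈ S, ‖x‖ = 1) (hdist : ∀ x ∈ S, ∀ y ∈ S, x ≠ y → 1 ≤ dist x y) :
    S.card ≤ c.bound := by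
  by_contra! hlt
  obtain ⟨T, hTS, hT⟩ := exists_subset_card_eq (Nat.succ_le_of_lt hlt)
  exact hc.card_ne hE (fun x hx => hnorm x (hTS hx))
    (fun x hx y hy => hdist x (hTS hx) y (hTS hy)) hT

end Certificate

namespace PreservesArithmetic

variable {α β : Type*} [Add α] [Mul α] [Sub α] [IntCast α] [Add β] [Mul β] [Sub β] [IntCast β]
  {f : α → β} (hf : PreservesArithmetic f) (c : Certificate)
include hf

lemma map_tripleSlack (p q r : α × α) :
    f (c.tripleSlack p q r) = c.tripleSlack (p.map f f) (q.map f f) (r.map f f) := by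
  simp only [Certificate.tripleSlack, hf.add, hf.sub, hf.map_binaryForm, hf.map_threePointKernel,
    hf.map_doubled]

lemma map_pairSlack (p : α × α) : f (c.pairSlack p) = c.pairSlack (p.map f f) := by
  simp only [Certificate.pairSlack, hf.sub, hf.mul, hf.intCast, hf.map_binaryForm,
    hf.map_threePointKernel, hf.map_twoPointKernel, hf.map_doubled]

lemma map_gramDefect (p q r : α × α) : f (Certificate.gramDefect p q r) =
    Certificate.gramDefect (p.map f f) (q.map f f) (r.map f f) := by
  simp only [Certificate.gramDefect, hf.add, hf.sub, hf.mul, hf.intCast, hf.map_doubled]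

end PreservesArithmetic

namespace Certificate

/-- The expressions to be evaluated at the coordinates `unitCoords` of an inner product. -/
def coordExprs (i : Fin 3) : PolyExpr × PolyExpr := (.var i, .covar i)

lemma map_eval_coordExprs {a : Fin 3 → ℝ} {u : ℝ} {i : Fin 3} (hu : a i = (unitCoords u).1) :
    (coordExprs i).map (PolyExpr.eval a) (PolyExpr.eval a) = unitCoords u :=
  Prod.ext hu (congrArg (1 - ·) hu)

lemma unitCoords_fst_mem_Icc {u : ℝ} (h₁ : -1 ≤ u) (h₂ : u ≤ 1 / 2) :
    (unitCoords u).1 ∈ Set.Icc (0 : ℝ) 1 := by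
  rw [unitCoords]
  constructor <;> linarith

lemma unitCoords_fst_mono : Monotone fun u => (unitCoords u).1 := fun u v huv => by
  simp only [unitCoords]
  linarith

/-- The constraint `0 ≤ gramDet`. The factor `2 ^ 50` is there because the Bernstein coefficients
are rounded to integers. -/
def gramEncoding : WordEncoding :=
  ⟨((2 ^ 50 : ℤ) : PolyExpr) * gramDefect (coordExprs 0) (coordExprs 1) (coordExprs 2),
    fun _ => 2, 64, 0, 2 ^ 58⟩

/-- The constraint `0 ≤ 0`. -/
def noConstraint : WordEncoding := ⟨.const 0, fun _ => 0, 1, 0, 1⟩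

lemma isSound_gramEncoding : gramEncoding.IsSound where
  width_pos := by decide +kernel
  degree_eq := by decide +kernel
  l1Bound_lt := by decide +kernel
  topBitsVanish := by decide +kernel

lemma isSound_noConstraint : noConstraint.IsSound where
  width_pos := by decide +kernel
  degree_eq := by decide +kernel
  l1Bound_lt := by decide +kernel
  topBitsVanish := by decide +kernel

lemma eval_gramEncoding {a : Fin 3 → ℝ} {u v t : ℝ} (hu : a 0 = (unitCoords u).1)
    (hv : a 1 = (unitCoords v).1) (ht : a 2 = (unitCoords t).1) :
    gramEncoding.expr.eval a = -(2 ^ 52 * gramDet u v t) := by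
  have hf := preservesArithmetic_eval a
  rw [gramEncoding, hf.mul, hf.intCast, hf.map_gramDefect, map_eval_coordExprs hu,
    map_eval_coordExprs hv, map_eval_coordExprs ht, gramDefect, gramDet, doubled_unitCoords,
    doubled_unitCoords, doubled_unitCoords]
  push_cast
  ring

variable {c : Certificate} {F : WordEncoding}

open WordEncoding

lemma tripleSlack_nonneg_of_holdsOn
    (hexpr : F.expr = c.tripleSlack (coordExprs 0) (coordExprs 1) (coordExprs 2)) (hF : F.IsSound)
    (h : (problem F gramEncoding).HoldsOn (cell F gramEncoding)) {u v t : ℝ} (hu : -1 ≤ u)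
    (huv : u ≤ v) (hvt : v ≤ t) (ht : t ≤ 1 / 2) (hgram : 0 ≤ gramDet u v t) :
    0 ≤ c.tripleSlack (unitCoords u) (unitCoords v) (unitCoords t) := by
  let a : Fin 3 → ℝ := ![(unitCoords u).1, (unitCoords v).1, (unitCoords t).1]
  have ha : ∀ i, a i ∈ Set.Icc (0 : ℝ) 1 := Fin.forall_fin_succ.2
    ⟨unitCoords_fst_mem_Icc hu (by linarith), Fin.forall_fin_two.2
      ⟨unitCoords_fst_mem_Icc (by linarith) (by linarith),
        unitCoords_fst_mem_Icc (by linarith) ht⟩⟩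
  have hnonneg := eval_nonneg_of_holdsOn hF isSound_gramEncoding h ha (unitCoords_fst_mono huv)
    (unitCoords_fst_mono hvt) (by rw [eval_gramEncoding rfl rfl rfl]; linarith)
  rwa [hexpr, (preservesArithmetic_eval a).map_tripleSlack, map_eval_coordExprs (u := u) rfl,
    map_eval_coordExprs (u := v) rfl, map_eval_coordExprs (u := t) rfl] at hnonneg

lemma pairSlack_nonneg_of_holdsOn (hexpr : F.expr = c.pairSlack (coordExprs 0)) (hF : F.IsSound)
    (h : (problem F noConstraint).HoldsOn (cell F noConstraint)) {u : ℝ} (hu : -1 ≤ u)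
    (hu' : u ≤ 1 / 2) : 0 ≤ c.pairSlack (unitCoords u) := by
  let a : Fin 3 → ℝ := ![(unitCoords u).1, 1, 1]
  have hmem := unitCoords_fst_mem_Icc hu hu'
  have ha : ∀ i, a i ∈ Set.Icc (0 : ℝ) 1 := Fin.forall_fin_succ.2
    ⟨hmem, Fin.forall_fin_two.2 ⟨Set.right_mem_Icc.2 zero_le_one, Set.right_mem_Icc.2 zero_le_one⟩⟩
  have hconstraint : noConstraint.expr.eval a ≤ 0 := Int.cast_zero.le
  have hnonneg := eval_nonneg_of_holdsOn hF isSound_noConstraint h ha hmem.2 le_rfl hconstraint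
  rwa [hexpr, (preservesArithmetic_eval a).map_pairSlack, map_eval_coordExprs (u := u) rfl]
    at hnonneg

end Certificate

/-- A certificate for the bound `24812` in dimension `19`. Its entries come from a rounded numerical
solution of the semidefinite program; the weight of the `k`-th block of `threePoint` is proportional
to `1 / (4 ^ k * 16 * 17 * ⋯ * (16 + k - 1))`, which undoes the scaling in `scaledGegenbauer`. -/
def certificateDim19 : Certificate where
  order := 16
  bound := 24812
  scale := 12437869075365888000 * 4 ^ 56
  twoPoint :=
    [0, 40711929373398697726718738479939859657917071360000,
     9766777220739193173192366291907147683401564160000,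
     2453596737126354805181788793242322793906831360000,
     497460403067533068182992629814534622096130048000,
     20253913068080674715672765847364220879527477248000,
     216826774706682629321535220520715008606208000, 2320870024358108413781513987542472589312000,
     72310797206075530711152069910926225408000, 29142244804304536796442946882826661120,
     42909621164115376908212691435778431, 688191040706599819974003775749832,
     36628805123133151649618837456678, 4300135559754061466064865520770,
     8628382626382718421813235364, 90966042668951601479145836, 1767206818821595767439276,
     35091745253307839252581, 486681960575326546085, 6200055247622499666, 85448467956320126]
  multiplier :=
    [160958141770767816861329247871357308192385419402068,
     38259791050996297762895684575864565694645702670486192,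
     -274730126407782377059506182580004954479404640412802107,
     -5269418565248194629509006297922344630503205382106891653,
     118632005762467090536384799547426805731007599128028663480,
     -1052276547788821949992994826741782423360574633577432552984,
     4966370860026276421432808967982486380818588229908648103968,
     -14543163834639411239176306981037532543336444942768172334379,
     28238224370305190698844596026892433993352388424565699029930,
     -37285016096156148969221532913481738961809999715992143455227,
     33764282043243154577326762552538437759364191167988825890256,
     -20757960792292461999403816405435961458429108227387425149585,
     8440756421026573152534340637419847146991943527353456465704,
     -2208007093161798243314028167989346271023106799316617253984,
     342854821623806983458028181179094057841969248539960384984,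
     -24566788280935306537314481652083253348511006342289210168,
     -207336325365564178386636362981868104237080894315240674]
  threePoint := [
    (12437869075365888000,
     [[1922610557173979, -245055932250478649, 6641419920245188456, 7650575655795182489,
       -1947336544498842735869, 23447765741853191902677, -126203823541956608318295,
       381309874296552610083197, -718386313195081847789357, 891842035954331885860328,
       -746625146218056064525366, 425645324079723061476446, -167549025247564912208202,
       45579850390761766219406, -7908776583351157212856, 610026759878327841158,
       13178727716290511296],
      [170313891980757646, -15302889622738277235, 454567563917913018282,
       -6311592132449440997456, 48012885163402973371280, -218725687206581670763707,
       626093282746583366931551, -1155682696876230386073236, 1396651262255591336885619,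
       -1110239382885672765801609, 570018537286718230875761, -178822121678206269479316,
       30971222807124750945167, -2439113257802023029676, 13261299818505804177,
       9512120548461530810],
      [1677897027548598093, -93581039146216162062, 1779058767809069336121,
       -15954545297461328773989, 77312319480126343344338, -220754898968319535600331,
       391762792976002766438521, -434088606554313695136575, 279304126395327825694733,
       -75518242681881553183507, -21175297073372327895625, 23874134039945497861731,
       -7466084013937587042224, 824423448101131993901, 11265828459131052030],
      [2061198986936291743, -66167835030894881162, 825786549085824940168,
       -5408583465537339193865, 21193612414604499395365, -52504616057123008205637,
       83055662850797451832399, -83517877294078874845086, 52929323075899231026401,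
       -20571242347731355253677, 4491509320523509439428, -435198595523372920937,
       15731685853241193541, -2749041600423124986],
      [32383316600452590902, -1059188850701559485511, 12139144206724607744807,
       -67285887849640217722163, 206329880169369737568863, -375109290138050405866193,
       420744703312284439345670, -296419097382249818346695, 130470806866200547080826,
       -34476853894897206983138, 4996540426884207170178, -357318108717133046160,
       11327295011083579955],
      [107578850875843680952, -1823525785512823223230, 11813237743566081969984,
       -39107359056962973386158, 74222292867058452298567, -85653311166179106592328,
       61694567053213706840424, -27686666870875219241215, 7458491606776866315470,
       -1104965609657300769931, 81018563239076951510, -2702097784845922265],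
      [135459603942722379996, -1587965277995408350351, 7248152492099637188237,
       -17145750541829417096515, 23679799484896191843158, -20236691078777411659234,
       10945225813082382897938, -3679185804940767103842, 707444347710456644873,
       -62746974544990619541, 856227335613131251],
      [276524970432805838663, -2061689035916715775399, 5549767077309810735767,
       -7239367663174196576699, 5190615649865969699324, -2084862035070976611288,
       367145206172823214925, 18351082942586391278, -5898585798853329339, -1596534086152173187],
      [160460416516680338673, -1114369899159673606151, 2913643009688182137191,
       -3811353157054710871011, 2842320786688214784955, -1261512055767377393823,
       309811209996882689492, -30316819500993333992, -491037160240456968],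
      [313603974767209866149, -1325735169801623869717, 2128851368918873465441,
       -1781606160496651179055, 858638803070334776062, -225202836828475548396,
       22688884125134749632, 592817659729951016],
      [101809248657459139708, -290060460180171153248, 314385638713162086370,
       -172736169763136768009, 50235537093769386994, -5804409127520080118, -148030532879785096],
      [53617152421462830732, -99591405316297090913, 62843576527762890634, -18608443161192472580,
       2232412891955527837, 67808006672682389],
      [26073098644684811968, -32896949314085027408, 13556411060555175533, -1736120895373231708,
       -214314787683399868],
      [7939647323769964374, -6575158137400996218, 1414279200631569919, -177990806546508534],
      [2367761990182806019, -1111449057884832135, -22413571495143309],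
      [1226376410101691101, -499011585664597595],
      [4779832184223017]]),
    (194341704302592000,
     [[104263335887069986, -5454718314327223877, 112871447705049002423, -1571683526018551015760,
       12017499934818590101071, -52438020121335924150393, 142243165166338301913781,
       -252730387662162384121914, 292981102541072565311728, -211273019962602096694365,
       87564705153680313815025, -19207909510674289185784, 3667283222246169123942,
       -1026244406197019231730, 215527203370441078513, -30771645744124561546],
      [6774682917128157298, -291195508615731127887, 4626884334211999813732,
       -39661218743331168051393, 202261989877312424556825, -645620733415191605642932,
       1329196701999691253903452, -1802140788724328066052177, 1621311605930187133007489,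
       -956488702786635211875035, 357007102174236530967594, -77994507822070964106362,
       8405049901179637857200, -214480742254002885713, -21061790609730981702],
      [90506075207827710447, -2108942295254967793264, 20275442395119907336054,
       -110621710871299371786501, 374674380122987654451435, -818078501406581016935873,
       1166056374734162111936823, -1091628341542108264801612, 666679735438147824872142,
       -253810872192923207069835, 54551576930493512431067, -5549917077129997429467,
       79259079500900349555, 25391202479751791535],
      [573472493278864017061, -9869630280360462059581, 71061574283049370728412,
       -283297833537782458674753, 694968091984292688158346, -1097565821511886839291275,
       1125518387888446979064887, -742232351132538296915575, 308525247012948078432594,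
       -77741258469162676353085, 10911672508992569252611, -850376773328262032697,
       32173858763118225163],
      [2649262055053098805494, -32469553021125241087200, 165699995529605956172434,
       -472590393732647486173115, 829239872823374785707841, -923945593006677960587586,
       656399516424876436875505, -292220239441848638468505, 78690339172146460229469,
       -12120541809520598612708, 805653991806338007120, 19040941772669056652],
      [5358340844004976910431, -55754378895434795667515, 228720594220908768282792,
       -495320584779176699259656, 629575844521006545365061, -481437611063591127576947,
       215403469362774089134384, -50873484696233382243281, 4173977809290134143665,
       208340366860493959702, 11257663490656221624],
      [8055586369845333979099, -54857796425772994674279, 156440801962442118918796,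
       -244222399058163660649739, 234877607418030831378732, -148267371493953369533539,
       61163406555472632293750, -15765136652813848732582, 2057381473319070753238,
       -71420643195295928117],
      [9578626057065234620192, -42967103724232683057685, 79651402694695837409061,
       -84015799244751450286077, 54685449049590762662266, -20963428135562488420782,
       4501613841878932674670, -567793530287394031123, -683899463516356676],
      [6005522286827844372889, -36347669669305537041339, 72483592816159989903168,
       -73985127475905137449640, 44885744235845657769320, -14977366792164416991303,
       2160555086361576427472, -35474601051560381651],
      [3058837641436145565934, -7418368060779307167240, 7863149694919376624501,
       -4864871314488716473622, 1602652572075172741853, -221806117325900168207,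
       -5730115347939049185],
      [1987413418229025117160, -4279482432597399896465, 4371191618358051841308,
       -2039870682156555540572, 373576839792180958545, -31395455515932416123],
      [160976366910548926184, -324849815341279212422, 182466160162184345801,
       -39333667748968618722, 2313869869351087870],
      [279510518486150061656, -185459794039862499063, 35165657704534104880,
       -5330628643183862754],
      [13874131842934403159, -5825079095890861994, -50349029150503514],
      [7853069248110424725, -1865810281447661778],
      [714846072865018365]]),
    (2857966239744000,
     [[223070137949546425, -17966828318092530425, 449408297191721440652,
       -5426257668354851355110, 38269844486205354933058, -168912041578480026005436,
       480576221994300346332826, -897528094318200198913219, 1104355348520825144574102,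
       -880909259646389336354159, 441181823114432280618981, -130900788709477107367671,
       20512908877818633901044, -1204633724789360979012, 22118138672002845619],
      [11967110009245118836, -543158009410150094086, 7754303665733905372405,
       -56708461429336641640214, 245393190878996562054194, -671750508732738591750561,
       1204990201414418443594551, -1439731805312892755378486, 1144040892184410160801618,
       -586542998495206670022862, 181181826875912548110208, -29912591231326025794931,
       2060921015867715848409, 6907610013971451642],
      [112925223440038876577, -2471979725442560842777, 20486867865797080877010,
       -91090466182873499648012, 238017560088407332325930, -376923665794475617305982,
       363850348651566879944291, -207763166977196101299682, 66187400756219073522937,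
       -14141861237736133628063, 4065566013830556664003, -1026228326630085038077,
       47469753483776298782],
      [1199499023983556409569, -17039393681181383598806, 96697542444374881663286,
       -300188165310550508497834, 567453493951742828944848, -675325704218078138501935,
       508563056662279628250698, -241190017844248317959779, 69803446024398166875424,
       -11578022176936675825534, 1050263889703125111232, -49913337588040190279],
      [3309527309174360816083, -29396940473971187325743, 111058271685825447676958,
       -240196716056096446000845, 331278681098972425561350, -296837550385243445902314,
       166534574894550269619429, -53492549448969193638290, 7381004442748243382418,
       85234852704670085642, -39342296224393271846],
      [11252637838675796703714, -85371318678284228441572, 263372863401687203491041,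
       -429666720992595016276619, 405268241220952245875508, -228471592580991124503428,
       76077500307474543602598, -14107081842309077633961, 1464462908636671292015,
       -86364283974159204065],
      [12652722706105636408202, -64954096624678565414480, 129185277077972652959871,
       -136142611567195078660687, 90718494136668032452172, -45326273683167021363438,
       16002979392285527969315, -3094299508212866365066, 204578095930473471980],
      [4880195983535926051422, -18705041973136779627189, 23859199371366165676209,
       -17403267852253120446955, 7987004948139320502297, -2316583761550092258921,
       514636863606915118332, 9548706243125900608],
      [7224867378459292114189, -24354044424028788064520, 34810338483059453760082,
       -28112188896091838196409, 12704041166466799439983, -2579058665461910668934,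
       121944244224436333781],
      [1358469099483950759260, -4607369147076697883194, 6801151424190902588848,
       -5188614964491066551360, 1269830651145466438048, -55891484022873869693],
      [1524903881709650688286, -3205323798759257076704, 2488489163255187087383,
       -634555014480012161768, 27304238242255033633],
      [227863905698656921082, -402825805630983263037, 106972351466046260566,
       -3061910958807640714],
      [96066330401405711808, -31714139561182834745, -475102411457624281],
      [3604902240122316642, 417008777101391199],
      [770069367750703050]]),
    (39693975552000,
     [[590197795397913192, -23314596348612802055, 415289403453462409912,
       -5048711414462252321683, 35463920867965714760998, -141513763709178072462982,
       345779570136444808413326, -548504791229374858211976, 573577002643007899800890,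
       -382410640992159636711251, 148435921990749420073789, -28263708353798480451255,
       1347670981104421413221, 109182390847269348065],
      [16639745562143152524, -619010826913326286758, 7325896726959931808727,
       -44245509995856623367387, 161339224195272396532196, -370924240665606682165941,
       543903650316676961305815, -510365852625423435841564, 304451804357128686450663,
       -113603606933772109465397, 25492297345468829059338, -3274492630366028947203,
       164616337588791188396],
      [250977898255041567831, -4284700112549205183151, 30654862096663910215220,
       -123501833697749534799691, 308560667283044092975591, -488984609415308239617275,
       490778051641424772455433, -310825700185804967552732, 122295216382600347076597,
       -28100214701972432083770, 3199871909951608460349, -194534944842554706357],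
      [1614691496159391118772, -19394407460390554190036, 93205396130264469854514,
       -242290671829402406114881, 376315748043334238080260, -357606814397906154904536,
       206880064784677410545695, -72524869229903009847468, 15267857165282643262914,
       -2038234234970114960886, 115272593544685664759],
      [4899672005280746724740, -42320878627989222160524, 153831949795527639619269,
       -305451130152395870761585, 359278570381853717704054, -257367503372483258938457,
       109991538849649347533279, -25328100456598576801762, 2666416478928347177669,
       -105418152961269564594],
      [11178155655298336649685, -71355778938522906923589, 178264474945274240376200,
       -230593807301207873732994, 170826857722550263782060, -77226293126266375027099,
       22855528434239284974395, -4226440925803600639498, 309225520024647780483],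
      [9474296795454727491333, -44152156919020388962740, 90407978224844696103188,
       -96055340939991287340749, 52605888080489689193679, -13748546423049918547782,
       1363937336393304581089, -21440404021095193868],
      [15704162525209745519045, -54167007201137532257396, 67564531403482015951351,
       -35365170619780691151283, 4496192333252566542922, 1288179744839524197690,
       -234132718802037607289],
      [1741241982890086199945, -825764664466915207246, -403862114133334045164,
       756686152034932158289, -486950751090544298340, 22527426809283811290],
      [524510345069183836304, -345359929675227166603, 35250322887071575462,
       -24090874465885840656, -5355631429295414280],
      [4013243698226579304394, -4558775802484548049707, 1421614729831638807878,
       -162632357636583437363],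
      [38205858225036994481, -25332336980695641358, 1198454291087539468],
      [8750052015437218396, -252956489600266381],
      [688131874316054523]]),
    (522289152000,
     [[627281072479532728, -40080798415340496047, 671921821430912288486,
       -5668019781802111996258, 25372949789687902974588, -66272323510015784804747,
       112556617562264876010155, -137408711991635907734519, 123588805835096749688067,
       -71595361771537534118368, 21046146407626865323072, -1878328868415206587420,
       -88844352140420571016],
      [20003325051596920742, -633027156388200327984, 6516545614149919022286,
       -33644331642572540173897, 104000125413244519706019, -196353013895469650814599,
       219818684459082307826946, -141012672568038948438852, 52738066264884959393063,
       -13751897940188882881419, 2928190885470544671468, -367353673340112106922],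
      [182900981805953785316, -3647221038504114892843, 24751508128514172124675,
       -81380793028078412060582, 153688829920984600027217, -181464386727976688686296,
       136844795701662235423445, -64688150142608776213426, 16746709283695266598242,
       -1820022537097639567400, 7434917652332603268],
      [1059485688835467968104, -11907647506173633031932, 55785639679539362459787,
       -145419466383279896787623, 226975452629017397017452, -212655908156363051169552,
       114881457996382950735490, -32472268765437138503425, 3766775462402294827116,
       -82272975564027260811],
      [3412948378420254637524, -24961464978422862785419, 66796756133844527581465,
       -84542613505674884284023, 58194316862403165303492, -27803642810183590417698,
       12682504081628311446425, -4154520924278226565833, 483034507621055454548],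
      [5531155712465119564576, -27477462376127953113110, 58297840729477986018818,
       -65793969941427230085821, 38403159642916437908996, -10608845522682371763306,
       1287929535262873651058, -4487969939582456991],
      [5170688144163523287765, -20291878520861595588379, 28121912481980423533145,
       -16616070498847212755803, 2276608160374992677913, 692401805669229611251,
       -170456598210479899683],
      [1789179736739650050001, -1754830753814633773402, 275938979372862617984,
       196152171664114183089, -289029748185281877284, 19441704228768748652],
      [382173842187136904555, -490790558909575511326, 178632424050876595453,
       -48652027826981586954, -598014046841495886],
      [58357266445539473082, -73814552635937059686, 25516162319641651280, -3598927077544922221],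
      [54402546499491076067, -10786559052738171998, 2553325581311248194],
      [6259314247229823269, -766808100168532465],
      [231392045046474002]]),
    (6528614400,
     [[1053871761232338059, -36093105910871434879, 140162216919343006375, 480303282742424314607,
       -3872689839034766648339, 13523488710987536496740, -34203597600829076331458,
       51446448957011086096037, -37681571676517123332429, 10209713437599557280595,
       173674053212621396377, -320359012030330641424],
      [16876065891045976512, -619695074326634636537, 6359490613926931057545,
       -29729357740428523886717, 75471386023398822645579, -106760061394211741976993,
       81166074125829754165983, -30396274955569650850378, 4883814634394283781597,
       -458258240319918693782, 128267662026951977933],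
      [168377604383734191475, -2553650525549164882341, 10950830055728204134557,
       -23406290785460755398951, 36580584254921442742621, -44982099353876476436292,
       34985048513013434686440, -12345140952162299370417, 619075202169010960265,
       256777288918282960762],
      [802269707289031644001, -6413757113075446298794, 22831831689665541688244,
       -45211668577077181227124, 54608652972619492517954, -39279985339959020143452,
       14721513367295521749765, -2405131521822967561953, 42177386855631454389],
      [1923354950630409478873, -11786747975346301432028, 31010856022381883783523,
       -42199725103591691472151, 31491210898847786949911, -13103641316078527692566,
       2808686617324044320118, -244505173788583941926],
      [1017097871984602566694, -5755086471812460954478, 13911533618698282152315,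
       -14311870502217703818581, 6911286736951064373776, -1303284282987740701317,
       62960171939157172672],
      [277483802795566575344, -715330358556772438724, 739037342645891044108,
       -299279192718289945311, 30852635366742215627, 3500356992641361489],
      [184944189270906339445, -284306037475101275989, 184553526005160124021,
       -42459448302413134644, 2942659507699952791],
      [32882892212288069177, -35144421940615144382, 16910248428973069729, -2373372920443096100],
      [22555955816866741392, -11088098095827549963, 2680243423158850722],
      [1941330174113901970, -202233629664105105],
      [145535052791796307]]),
    (77721600,
     [[1008128627843288637, -44969020534899565566, 473458512761856943842,
       -2782585412415865428252, 9777810204102779683828, -16472613754006683741555,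
       9349432452721101242546, 4392616449506209117937, -5457701381387824238080,
       843674517811934389204, 145561821841214634023],
      [19322344051970406380, -581273404245714633933, 4448270461859962010012,
       -15528414659114529590496, 32411927130456674380672, -43036829648914744713518,
       33133137840291083545423, -12652909753716229592747, 1681037220409293560312,
       52677971981352908660],
      [21321269858545216678, -248840251059472532693, 1915892582704915308336,
       -8017268185576110871156, 17208739853124873423400, -17603185533926705658222,
       8739847288695882248294, -1868144367190101982619, 122017087685032305689],
      [287855252165654754602, 12136574783929792282, -4650825452980723004448,
       13376265903026642910544, -15010139159446415592492, 6964483219022009553696,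
       -1239327559521677433959, 13010775999201783332],
      [122559632115777307923, -744131326262964868450, 1778741484065437606808,
       -1901474649935208657290, 964023865786224458372, -210233373164501348721,
       13946905675782387852],
      [113572480436938511846, -414204905563921630278, 523865421237702353780,
       -297709419334434850652, 67809663153819341439, -4742161440995806461],
      [32527376614354288578, -47440461788834702658, 41200509927768374501, -11778211969701777070,
       1443058549692478358],
      [30540027386418369373, -43345969332380267802, 18795714870464019219, -2602936281497870866],
      [4487587003371737300, -2492875767882243089, 571607926409143826],
      [2150346364839642627, -598775604641089065],
      [98322814777226312]]),
    (883200,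
     [[765231332142717051, -42141413214835733329, 508505175305750726621,
       -2338807181715513205905, 6574247547438940990505, -13345949176634507805451,
       16069309938300930886717, -9776035749474773577070, 2370240636596618965738,
       -105872117640702605305],
      [582755790191603762, -37750418744733884122, 326079853417915587735, -639324964243387391044,
       -53047361617651505715, 1731511655081147156723, -1801951861438553345395,
       711775394314254044986, -85652590593661124588],
      [8631551528160766487, -81323122140935551898, 130837742003875254315, 139711165126131602778,
       -663468916510902082680, 627805880996932517784, -239433697605697938538,
       28479378435356606395],
      [3895945247421171751, -38040786607039501501, 128640396629215703090,
       -199110014121262688766, 140836771402601400478, -44033697358387608224,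
       4399127892631433712],
      [16008757918092169181, -62454895424422987348, 108420477042296400625,
       -83163454741054856282, 29639346694058912253, -3634949284412705290],
      [9707029272845604386, -25151376870297457685, 20842176764608977055, -5765455527195788042,
       160670825488471184],
      [3637078045718166852, -6591093311524402727, 4384669527220970934, -863313431159366275],
      [4008100776107589642, -3659822606173773918, 939145976322671002],
      [309811313360924496, -138689653271066331],
      [74500547291735680]]),
    (9600,
     [[155764727713584616, -7927517349546040760, 51087025166819942888, 123179200309441751197,
       -948212241715659434984, 1924123407091894915347, -1600387040280814560832,
       551479000635092284045, -54025746290343295777],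
      [3334371272905090602, -103063573412061539226, 769332798745782999156,
       -2370577157924571065478, 3532427516275905027949, -2642986966566025802048,
       922180686165425769404, -114893276213735562988],
      [1846703242915746833, -18055545705359752292, 62127591626509662009, -99043912981662681106,
       77044314594304022962, -27020533185919139974, 3195579079536956596],
      [1800678005306896272, -9548988683554597078, 20391239409410798532, -18660006420321806795,
       6837204088401531026, -664478581843474359],
      [1895781675245929872, -6149436613039491758, 7408805149439397448, -3405618100994704267,
       492079518761036160],
      [986058877380562332, -2115244586271146705, 1687691568478443930, -414714000841352015],
      [676570234316295922, -1070913714394331665, 399775269938850138],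
      [330075775992276248, -177544397849666191],
      [19388442712415222]]),
    (100,
     [[4072222017960482, -150148880335558856, 1216172425562339180, -4285446660462439139,
       7407730126647813741, -5941421035294620144, 1785529256968324561, -50844492054626765],
      [74147505010926423, -821237526861955304, 3291741027338855855, -6046686134049140194,
       5339972620705977460, -2152624077563361389, 307856567297188069],
      [183594342695428863, -1392492602998391327, 3522359893103554859, -3864472875142957043,
       1924816303068845515, -363151757487691425],
      [240343749738455332, -1030024583396217582, 1612021858683019704, -987278159163975194,
       197491306012565017],
      [370050093183077992, -1022332864133120025, 863113174188367438, -214543326672669428],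
      [223608114180503129, -385448662326407134, 163675299316801891],
      [81309200723626940, -61077805365592928],
      [14807431608575685]]),
    (1,
     [[1926933136895237, -43440223624982743, 295357651140438224, -928210263675541367,
       1391771085958275767, -892055786639855557, 181099469688890665],
      [45071065445710926, -404458476355309337, 1244943528880973036, -1685799722319069667,
       1009697244344111867, -214674822001747911],
      [79863001763786493, -538909184334395088, 1082661062955985984, -790857501853974282,
       181140055199167268],
      [92924748495634926, -312385283230075479, 296816738390391389, -76668076161101085],
      [74500147075397179, -165007901326984255, 80336426377907026],
      [40202975462856334, -36337785451615114],
      [7758037127854457]])]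

namespace certificateDim19

open Certificate WordEncoding

/-- The triple inequality. -/
def tripleEncoding : WordEncoding :=
  ⟨certificateDim19.tripleSlack (coordExprs 0) (coordExprs 1) (coordExprs 2),
    fun _ => 16, 272, 145, 5116304833539564378⟩

/-- The pair inequality. -/
def pairEncoding : WordEncoding :=
  ⟨certificateDim19.pairSlack (coordExprs 0), ![32, 0, 0], 240, 136, 4313479597526725759⟩

/-- The subdivision found by a search to prove the triple inequality. -/
def tripleTree : SplitTree := .decode 46 (Nat.ofDigits (10 ^ 92)
  [40713395288375296041924623159193148466807763182360072203257905273910955129498825305681481301,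
   66745534119119264773147828446175807854989074094030506346467838514590143894920626172539214216,
   21593449330035789811846427478121198982447166639325320073994504518861865688873142190928668261,
   58950339028034736526404154855077570355370270781093930852787861364432373540560419917448261221,
   63762579251470698096067861063810788952958462817563813404227334469327200533485787321129170979,
   74183446377156845564813783347703229155156049396012204924827948845360236335453648499376278874,
   42330223288171758986588777763435676760851671973558817434800023134229747163189916914008645124,
   61736052701142208507701484418343044809133140141600440450018192843140427917180780184008724034,
   52634036240609313860381897376408507089132752967997831595950032583479188548484875826665762923,
   9209190349265410877367633153648813920529603975783732791550221414409700459729428989267532513,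
   32376698520798512705375820846479191060326491673073531547044697831302800180571259791105300167,
   83886889341132290422031193711029381790357465926440191374398994914144922829820068629226186670,
   15228902672715745856115231320040965571803553653914439628604975208234874410136470406497724086,
   72728047712943424500196069054126399564240600816825523953612420259521932539223053334604080196,
   6490726671179828040195942883297897034622347263702491567484917308429915680886134046240836562,
   65659215306560004235218608125569009493169675298718176847591333963210229393894529676152056259,
   66282139963498311993380339382695126584713377185732391098941794502393736823816420233597598247,
   63975720347473273366063957313618810727491659361726100990190519399065812844630444384484412757,
   56569743326848531883820106619705424352253247324494493969250893568075384082454009602139620427,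
   88294984414989931043995133181753420898721756316900488508471026136494128490546924160615485475,
   20638634972877114069554541883732759945278222144156594795852317379146049384293088447283336589,
   30047410720229679475853299418194587170691191826624960061498526405346353320936083294824772151,
   49886118997219515931291275407523382268933806221580762374529147285792394755613298969427490472,
   91661171632357983873810154962045410978142411671714782870791005988190311110003465729325451805,
   1621592343108355506906039867617511290553048736])

/-- The subdivision proving the pair inequality. -/
def pairTree : SplitTree := .decode 7 21761098069

/-- The subtrees into which the verification of the triple inequality is divided. -/
def tripleFrontier : List (SplitTree × Cell) :=
  tripleTree.frontier (problem tripleEncoding gramEncoding) 300 (cell tripleEncoding gramEncoding)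

/-- Whether the triple inequality is verified by all of the given subtrees. -/
def tripleChecks (l : List (SplitTree × Cell)) : Bool :=
  l.all fun p => p.1.check (problem tripleEncoding gramEncoding) p.2

set_option maxRecDepth 100000

lemma isSound_tripleEncoding : tripleEncoding.IsSound where
  width_pos := by decide +kernel
  degree_eq := by decide +kernel
  l1Bound_lt := by decide +kernel
  topBitsVanish := by decide +kernel

lemma isSound_pairEncoding : pairEncoding.IsSound where
  width_pos := by decide +kernel
  degree_eq := by decide +kernel
  l1Bound_lt := by decide +kernel
  topBitsVanish := by decide +kernel

-- The division in two halves limits the memory needed by the kernel.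
lemma tripleChecks_take : tripleChecks (tripleFrontier.take 10) := by decide +kernel

lemma tripleChecks_drop : tripleChecks (tripleFrontier.drop 10) := by decide +kernel

lemma holdsOn_triple :
    (problem tripleEncoding gramEncoding).HoldsOn (cell tripleEncoding gramEncoding) := by
  have hall : tripleChecks tripleFrontier := by
    rw [← List.take_append_drop 10 tripleFrontier, tripleChecks, List.all_append, ← tripleChecks,
      ← tripleChecks, tripleChecks_take, tripleChecks_drop, Bool.and_self]
  exact SplitTree.holdsOn_of_forall_frontier
    (isPacked_cell isSound_tripleEncoding isSound_gramEncoding) (List.all_eq_true.1 hall)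

lemma holdsOn_pair : (problem pairEncoding noConstraint).HoldsOn (cell pairEncoding noConstraint) :=
  SplitTree.holdsOn_of_check (T := pairTree)
    (isPacked_cell isSound_pairEncoding isSound_noConstraint) (by decide +kernel)

lemma isValid : certificateDim19.IsValid where
  tripleSlack_nonneg _ _ _ :=
    tripleSlack_nonneg_of_holdsOn rfl isSound_tripleEncoding holdsOn_triple
  pairSlack_nonneg _ := pairSlack_nonneg_of_holdsOn rfl isSound_pairEncoding holdsOn_pair
  twoPointKernel_lt := by decide +kernel

end certificateDim19

end KissingNumber

theorem kissing_number_dim19_le_24812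
    (S : Finset (EuclideanSpace ℝ (Fin 19)))
    (hnorm : ∀ x ∈ S, ‖x‖ = 1)
    (hdist : ∀ x ∈ S, ∀ y ∈ S, x ≠ y → 1 ≤ dist x y) :
    S.card ≤ 24812 :=
  KissingNumber.certificateDim19.isValid.card_le finrank_euclideanSpace_fin hnorm hdist
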